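/- Let N be a lattice of rank d ≥ 1 with dual lattice M = Hom_ℤ(N, ℤ), and let σ ⊆ N_ℝ be a rational polyhedral cone with dim σ = d and σ ≠ N_ℝ. Let U ⊆ N_ℝ be a convex set of the form U = conv(F) + cone(G), where F ⊆ N_ℝ is finite and G ⊆ N is finite, such that: 0 ∈ U; ⋃_{t>0} tU = σ; and N ∩ U contains a finite set generating σ as a convex cone. Let a > 0 and suppose N ∩ int(aU) = ∅. Then there exists a nonzero φ ∈ M with φ_ℝ nonnegative on σ and φ_ℝ(U) ⊆ [0, 1/γ(d,a)], where γ(d,a) is defined by γ(1,a) = a and γ(d,a) = γ(d−1, a²/d²) for d ≥ 2 (equivalently γ(d,a) = a^(2^(d−1)) / ∏_{i=1}^{d} i^(2^(i−1))). -/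

import Mathlib

open Pointwise

/-- The lattice `ℤ^d` viewed inside its realification `ℝ^d`
(a model of an arbitrary lattice of rank `d`); its dual lattice `M` is again `ℤ^d`,
paired by `⟨m, e⟩ = ∑ i, m i * e i`. -/
def intPts (d : ℕ) : Set (Fin d → ℝ) := {x | ∀ i, ∃ n : ℤ, x i = (n : ℝ)}

/-- The convex cone generated by a set `s`: all finite nonnegative linear
combinations of elements of `s`. -/
def coneHull {V : Type*} [AddCommGroup V] [Module ℝ V] (s : Set V) : Set V :=
  {x | ∃ (n : ℕ) (c : Fin n → ℝ) (v : Fin n → V),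
    (∀ i, 0 ≤ c i) ∧ (∀ i, v i ∈ s) ∧ x = ∑ i, c i • v i}

/-- The function `γ(d, a)` defined recursively by `γ(1, a) = a` and
`γ(d, a) = γ(d - 1, a² / d²)` for `d ≥ 2`. -/
noncomputable def gammaFn : ℕ → ℝ → ℝ
  | 0, a => a
  | 1, a => a
  | n + 2, a => gammaFn (n + 1) (a ^ 2 / ((n : ℝ) + 2) ^ 2)

section AlgebraicInterior

variable {V : Type} [AddCommGroup V] [Module ℝ V]

/-- The algebraic interior of a set in a real vector space. -/
def algInterior (U : Set V) : Set V := {x | ∀ v : V, ∃ ε : ℝ, 0 < ε ∧ x + ε • v ∈ U}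

lemma mem_of_mem_algInterior {U : Set V} {x : V} (hx : x ∈ algInterior U) : x ∈ U := by
  obtain ⟨ε, -, h⟩ := hx 0
  simpa using h

lemma combo_mem_algInterior {U : Set V} (hU : Convex ℝ U) {c u : V} (hc : c ∈ algInterior U)
    (hu : u ∈ U) {t : ℝ} (ht0 : 0 ≤ t) (ht1 : t < 1) : (1 - t) • c + t • u ∈ algInterior U := by
  intro v
  obtain ⟨ε, hε, h⟩ := hc v
  refine ⟨(1 - t) * ε, by nlinarith, ?_⟩
  have := hU h hu (a := 1 - t) (b := t) (by linarith) ht0 (by ring)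
  convert this using 1
  module

lemma convex_algInterior {U : Set V} (hU : Convex ℝ U) : Convex ℝ (algInterior U) := by
  intro x hx y hy s t hs ht hst
  rcases eq_or_lt_of_le hs with rfl | hs'
  · obtain rfl : t = 1 := by linarith
    simpa using hy
  · obtain rfl : s = 1 - t := by linarith
    exact combo_mem_algInterior hU hx (mem_of_mem_algInterior hy) ht (by linarith)

lemma smul_mem_of_convex {U : Set V} (hU : Convex ℝ U) (h0 : (0 : V) ∈ U) {u : V} (hu : u ∈ U)
    {t : ℝ} (ht0 : 0 ≤ t) (ht1 : t ≤ 1) : t • u ∈ U := by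
  have := hU hu h0 (a := t) (b := 1 - t) ht0 (by linarith) (by ring)
  simpa using this

lemma smul_mem_algInterior {U : Set V} (hU : Convex ℝ U) (h0 : (0 : V) ∈ U) {c : V}
    (hc : c ∈ algInterior U) {t : ℝ} (ht0 : 0 < t) (ht1 : t ≤ 1) : t • c ∈ algInterior U := by
  have := combo_mem_algInterior hU hc h0 (t := 1 - t) (by linarith) (by linarith)
  simpa using this

/-- A linear form that is nonnegative on `U` is positive on the algebraic interior, unless zero. -/
lemma pos_of_mem_algInterior {U : Set V} {ψ : V →ₗ[ℝ] ℝ} (hψ : ψ ≠ 0)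
    (hU : ∀ u ∈ U, 0 ≤ ψ u) {x : V} (hx : x ∈ algInterior U) : 0 < ψ x := by
  obtain ⟨v, hv⟩ : ∃ v, ψ v < 0 := by
    by_contra! h
    apply hψ
    ext v
    have h1 := h v
    have h2 := h (-v)
    simp only [map_neg] at h2
    simp only [LinearMap.zero_apply]
    linarith
  obtain ⟨ε, hε, h⟩ := hx v
  have := hU _ h
  simp only [map_add, map_smul, smul_eq_mul] at this
  nlinarith

lemma exists_of_mem_algInterior_image {W : Type} [AddCommGroup W] [Module ℝ W] {U : Set V}
    (hU : Convex ℝ U) (hne : (algInterior U).Nonempty) (f : V →ₗ[ℝ] W)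
    {y : W} (hy : y ∈ algInterior (f '' U)) : ∃ x ∈ algInterior U, f x = y := by
  obtain ⟨c, hc⟩ := hne
  obtain ⟨ε, hε, u, hu, hfu⟩ := hy (y - f c)
  have h1 : (0 : ℝ) < 1 + ε := by linarith
  refine ⟨(1 - 1 / (1 + ε)) • c + (1 / (1 + ε)) • u, combo_mem_algInterior hU hc hu (by positivity)
    (by rw [div_lt_one h1]; linarith), ?_⟩
  have h2 : (1 + ε) * (1 / (1 + ε)) = 1 := by field_simp
  simp only [map_add, map_smul, hfu]
  have : y = ((1 + ε) * (1 / (1 + ε))) • y := by rw [h2, one_smul]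
  have h3 : (1 - 1 / (1 + ε)) = ε * (1 / (1 + ε)) := by field_simp; ring
  rw [h3]
  conv_rhs => rw [this]
  module

lemma algInterior_slice {U : Set V} (hU : Convex ℝ U) (L : Submodule ℝ V) {c : V}
    (hc : c ∈ algInterior U) (hcL : c ∈ L) {x : L}
    (hx : x ∈ algInterior {y : L | (y : V) ∈ U}) : (x : V) ∈ algInterior U := by
  obtain ⟨ε, hε, h⟩ := hx (x - ⟨c, hcL⟩)
  have h' : (x : V) + ε • ((x : V) - c) ∈ U := by simpa using h
  have h1 : (0 : ℝ) < 1 + ε := by linarith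
  have := combo_mem_algInterior hU hc h' (t := 1 / (1 + ε)) (by positivity)
    (by rw [div_lt_one h1]; linarith)
  convert this using 1
  have h2 : (1 + ε) * (1 / (1 + ε)) = 1 := by field_simp
  have h3 : (1 - 1 / (1 + ε)) = ε * (1 / (1 + ε)) := by field_simp; ring
  rw [h3]
  have h4 : (x : V) = ((1 + ε) * (1 / (1 + ε))) • (x : V) := by rw [h2, one_smul]
  nth_rewrite 1 [h4]
  module

lemma mem_smul_algInterior {U : Set V} {r : ℝ} (hr : 0 < r) {x : V}
    (hx : x ∈ algInterior (r • U)) : ∃ y ∈ algInterior U, x = r • y := by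
  refine ⟨r⁻¹ • x, fun v => ?_, by rw [smul_smul, mul_inv_cancel₀ hr.ne', one_smul]⟩
  obtain ⟨ε, hε, u, hu, h⟩ := hx (r • v)
  refine ⟨ε, hε, ?_⟩
  have h' : r • u = x + ε • r • v := h
  have : u = r⁻¹ • (r • u) := by rw [smul_smul, inv_mul_cancel₀ hr.ne', one_smul]
  rw [h', smul_add, smul_comm ε r v, smul_smul r⁻¹ r, inv_mul_cancel₀ hr.ne', one_smul] at this
  rwa [← this]

/-- Scalar combinations of two differences of elements of a convex set. -/
lemma exists_diff_combo {U : Set V} (hU : Convex ℝ U) {u u' v v' : V} (hu : u ∈ U) (hu' : u' ∈ U)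
    (hv : v ∈ U) (hv' : v' ∈ U) {ν κ : ℝ} :
    ∃ w ∈ U, ∃ w' ∈ U, ν • (v - v') + κ • (u - u') = (|ν| + |κ|) • (w - w') := by
  wlog hν : 0 ≤ ν generalizing ν v v'
  · have := this hv' hv (ν := -ν) (by linarith)
    rw [abs_neg] at this
    obtain ⟨w, hw, w', hw', h⟩ := this
    exact ⟨w, hw, w', hw', by rw [← h]; module⟩
  wlog hκ : 0 ≤ κ generalizing κ u u'
  · have := this hu' hu (κ := -κ) (by linarith)
    rw [abs_neg] at this
    obtain ⟨w, hw, w', hw', h⟩ := this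
    exact ⟨w, hw, w', hw', by rw [← h]; module⟩
  rw [abs_of_nonneg hν, abs_of_nonneg hκ]
  rcases eq_or_lt_of_le (add_nonneg hν hκ) with h0 | hpos
  · have h1 : ν = 0 := by linarith
    have h2 : κ = 0 := by linarith
    exact ⟨u, hu, u, hu, by simp [h1, h2]⟩
  refine ⟨(ν / (ν + κ)) • v + (κ / (ν + κ)) • u, hU hv hu (by positivity) (by positivity)
    (by field_simp), (ν / (ν + κ)) • v' + (κ / (ν + κ)) • u', hU hv' hu' (by positivity)
    (by positivity) (by field_simp), ?_⟩
  have e1 : ν = (ν + κ) * (ν / (ν + κ)) := by field_simp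
  have e2 : κ = (ν + κ) * (κ / (ν + κ)) := by field_simp
  nth_rewrite 1 [e1]
  nth_rewrite 3 [e2]
  module

end AlgebraicInterior

section Generation

variable {V : Type} [AddCommGroup V] [Module ℝ V]

lemma sum_smul_mem_of_sum_le_one {U : Set V} (hU : Convex ℝ U) (h0 : (0 : V) ∈ U) {E : Finset V}
    (hE : ∀ e ∈ E, e ∈ U) {c : V → ℝ} (hc : ∀ e ∈ E, 0 ≤ c e) (hsum : ∑ e ∈ E, c e ≤ 1) :
    ∑ e ∈ E, c e • e ∈ U := by
  have h := hU.sum_mem (t := Finset.insertNone E) (w := fun o : Option V => o.elim (1 - ∑ e ∈ E, c e) c)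
    (z := fun o : Option V => o.elim 0 id) (by
      intro i hi
      cases i with
      | none => simpa using hsum
      | some e => exact hc e (by simpa using hi)) (by simp) (by
      intro i hi
      cases i with
      | none => exact h0
      | some e => exact hE e (by simpa using hi))
  simpa using h

lemma sum_smul_mem_algInterior {U : Set V} (hU : Convex ℝ U) (h0 : (0 : V) ∈ U) {E : Finset V}
    (hE : ∀ e ∈ E, e ∈ U) (hspan : Submodule.span ℝ (E : Set V) = ⊤) {c : V → ℝ}
    (hc : ∀ e ∈ E, 0 < c e) (hsum : ∑ e ∈ E, c e < 1) :
    ∑ e ∈ E, c e • e ∈ algInterior U := by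
  intro v
  have hv : v ∈ Submodule.span ℝ (E : Set V) := by rw [hspan]; trivial
  obtain ⟨y, -, rfl⟩ := Submodule.mem_span_finset.1 hv
  have hcont : ∀ r s : ℝ, Filter.Tendsto (fun ε : ℝ => r + ε * s) (nhdsWithin 0 (Set.Ioi 0))
      (nhds r) := by
    intro r s
    have : Continuous (fun ε : ℝ => r + ε * s) := by fun_prop
    have h := this.tendsto 0
    simp only [zero_mul, add_zero] at h
    exact h.mono_left nhdsWithin_le_nhds
  have h1 : ∀ᶠ ε : ℝ in nhdsWithin 0 (Set.Ioi 0), ∀ e ∈ E, 0 < c e + ε * y e := by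
    rw [Filter.eventually_all_finset]
    intro e he
    exact (hcont _ _).eventually (lt_mem_nhds (hc e he))
  have h2 : ∀ᶠ ε : ℝ in nhdsWithin 0 (Set.Ioi 0), ∑ e ∈ E, c e + ε * ∑ e ∈ E, y e < 1 :=
    (hcont _ _).eventually (gt_mem_nhds hsum)
  obtain ⟨ε, ⟨h1, h2⟩, hε⟩ := ((h1.and h2).and self_mem_nhdsWithin).exists
  refine ⟨ε, hε, ?_⟩
  have := sum_smul_mem_of_sum_le_one hU h0 hE (c := fun e => c e + ε * y e)
    (fun e he => (h1 e he).le) (by rw [Finset.sum_add_distrib, ← Finset.mul_sum]; exact h2.le)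
  convert this using 1
  simp only [add_smul, Finset.sum_add_distrib, Finset.smul_sum, smul_smul]

/-- A convex set containing the origin, spanned and contained in the cone generated by
finitely many lattice points which it contains. -/
structure LatticeGenerated (N : AddSubgroup V) (U : Set V) (E : Finset V) : Prop where
  convex : Convex ℝ U
  zero_mem : (0 : V) ∈ U
  lat : ∀ e ∈ E, e ∈ N
  mem : ∀ e ∈ E, e ∈ U
  span : Submodule.span ℝ (E : Set V) = ⊤
  cone : ∀ u ∈ U, ∃ c : V → ℝ, (∀ e, 0 ≤ c e) ∧ u = ∑ e ∈ E, c e • e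

/-- The dilation of the algebraic interior of `U` by `a` contains no point of `N`. -/
def LatticeFree (N : AddSubgroup V) (U : Set V) (a : ℝ) : Prop :=
  ∀ z ∈ N, ∀ v ∈ algInterior U, z ≠ a • v

/-- There is a nonzero integral linear form whose values on `U` lie in `[0, B]`. -/
def HasIntegralForm (N : AddSubgroup V) (U : Set V) (B : ℝ) : Prop :=
  ∃ φ : V →ₗ[ℝ] ℝ, φ ≠ 0 ∧ (∀ z ∈ N, ∃ k : ℤ, φ z = k) ∧ ∀ u ∈ U, 0 ≤ φ u ∧ φ u ≤ B

lemma HasIntegralForm.mono {N : AddSubgroup V} {U : Set V} {B B' : ℝ}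
    (h : HasIntegralForm N U B) (hB : B ≤ B') : HasIntegralForm N U B' := by
  obtain ⟨φ, h0, hN, hU⟩ := h
  exact ⟨φ, h0, hN, fun u hu => ⟨(hU u hu).1, (hU u hu).2.trans hB⟩⟩

/-- Lattice points outside `L` stay at distance at least `x` from `L`, measured by `U - U`. -/
def Separated (N : AddSubgroup V) (U : Set V) (L : Submodule ℝ V) (x : ℝ) : Prop :=
  ∀ z ∈ N, ∀ μ : ℝ, 0 ≤ μ → μ < x → ∀ v ∈ U, ∀ v' ∈ U, z - μ • (v - v') ∈ L → z ∈ L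

lemma Separated.mono {N : AddSubgroup V} {U : Set V} {L : Submodule ℝ V} {x y : ℝ}
    (h : Separated N U L x) (hxy : y ≤ x) : Separated N U L y :=
  fun z hz μ h0 h1 => h z hz μ h0 (h1.trans_le hxy)

/-- The convex cone generated by a finite set. -/
def finCone (E : Finset V) : PointedCone ℝ V where
  carrier := {x | ∃ c : V → ℝ, (∀ e, 0 ≤ c e) ∧ x = ∑ e ∈ E, c e • e}
  zero_mem' := ⟨0, by simp, by simp⟩
  add_mem' := by
    rintro _ _ ⟨c, hc, rfl⟩ ⟨c', hc', rfl⟩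
    exact ⟨c + c', fun e => add_nonneg (hc e) (hc' e), by
      simp [add_smul, Finset.sum_add_distrib]⟩
  smul_mem' := by
    rintro ⟨r, hr⟩ _ ⟨c, hc, rfl⟩
    refine ⟨r • c, fun e => mul_nonneg hr (hc e), ?_⟩
    change r • (∑ e ∈ E, c e • e) = _
    simp [Finset.smul_sum, smul_smul]

lemma nonneg_of_mem_finCone {E : Finset V} {ψ : V →ₗ[ℝ] ℝ} (hψ : ∀ e ∈ E, 0 ≤ ψ e) {x : V}
    (hx : x ∈ finCone E) : 0 ≤ ψ x := by
  obtain ⟨c, hc, rfl⟩ := hx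
  simp only [map_sum, map_smul, smul_eq_mul]
  exact Finset.sum_nonneg fun e he => mul_nonneg (hc e) (hψ e he)

lemma smul_mem_finCone {E : Finset V} {x : V} (hx : x ∈ finCone E) {r : ℝ} (hr : 0 ≤ r) :
    r • x ∈ finCone E := (finCone E).smul_mem hr hx

lemma mem_finCone_of_mem {E : Finset V} {e : V} (he : e ∈ E) : e ∈ finCone E := by
  classical
  refine ⟨fun v => if v = e then 1 else 0, fun v => by dsimp only; split_ifs <;> norm_num, ?_⟩
  simp [he]

/-- Moving a nonnegative linear form in a direction until it vanishes at a generator. -/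
lemma exists_push {E : Finset V} {ψ η : V →ₗ[ℝ] ℝ} (hψ : ∀ e ∈ E, 0 ≤ ψ e)
    (hη : ∃ e ∈ E, η e < 0) : ∃ t : ℝ, 0 ≤ t ∧ ∃ e₀ ∈ E, η e₀ < 0 ∧ (ψ + t • η) e₀ = 0 ∧
      ∀ e ∈ E, 0 ≤ (ψ + t • η) e := by
  classical
  obtain ⟨e₁, he₁, h₁⟩ := hη
  obtain ⟨e₀, he₀, hmin⟩ := Finset.exists_min_image (E.filter fun e => η e < 0)
    (fun e => ψ e / (-η e)) ⟨e₁, by simp [he₁, h₁]⟩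
  simp only [Finset.mem_filter] at he₀ hmin
  have hpos : 0 < -η e₀ := by linarith [he₀.2]
  refine ⟨ψ e₀ / (-η e₀), div_nonneg (hψ _ he₀.1) hpos.le, e₀, he₀.1, he₀.2, ?_, ?_⟩
  · simp only [LinearMap.add_apply, LinearMap.smul_apply, smul_eq_mul]
    have := he₀.2.ne
    field_simp
    ring
  · intro e he
    simp only [LinearMap.add_apply, LinearMap.smul_apply, smul_eq_mul]
    rcases lt_or_ge (η e) 0 with h | h
    · have h2 := hmin e ⟨he, h⟩
      have h3 : 0 < -η e := by linarith
      rw [le_div_iff₀ h3] at h2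
      linarith
    · have h2 : 0 ≤ ψ e₀ / (-η e₀) := div_nonneg (hψ _ he₀.1) hpos.le
      have := hψ e he
      positivity

namespace LatticeGenerated

variable {N : AddSubgroup V} {U : Set V} {E : Finset V}

lemma nonneg (h : LatticeGenerated N U E) {ψ : V →ₗ[ℝ] ℝ} (hψ : ∀ e ∈ E, 0 ≤ ψ e) :
    ∀ u ∈ U, 0 ≤ ψ u := fun u hu => nonneg_of_mem_finCone hψ (h.cone u hu)

lemma algInterior_nonempty (h : LatticeGenerated N U E) : (algInterior U).Nonempty := by
  refine ⟨_, sum_smul_mem_algInterior h.convex h.zero_mem h.mem h.span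
    (c := fun _ => 1 / (E.card + 1 : ℝ)) (fun _ _ => by positivity) ?_⟩
  rw [Finset.sum_const, nsmul_eq_mul, mul_one_div, div_lt_one (by positivity)]
  linarith

lemma exists_not_mem (h : LatticeGenerated N U E) {L : Submodule ℝ V} (hL : L ≠ ⊤) :
    ∃ e ∈ E, e ∉ L := by
  by_contra! hE
  apply hL
  rw [eq_top_iff, ← h.span]
  exact Submodule.span_le.2 hE

lemma exists_apply_ne_zero (h : LatticeGenerated N U E) {η : V →ₗ[ℝ] ℝ} (hη : η ≠ 0) :
    ∃ e ∈ E, η e ≠ 0 := h.exists_not_mem (L := LinearMap.ker η) (by rwa [Ne, LinearMap.ker_eq_top])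

lemma exists_smul_mem (h : LatticeGenerated N U E) {x : V} (hx : x ∈ finCone E) :
    ∃ r : ℝ, 0 < r ∧ r • x ∈ U := by
  obtain ⟨c, hc, rfl⟩ := hx
  have hS : 0 ≤ ∑ e ∈ E, c e := Finset.sum_nonneg fun e _ => hc e
  refine ⟨1 / (1 + ∑ e ∈ E, c e), by positivity, ?_⟩
  rw [Finset.smul_sum]
  simp only [smul_smul]
  apply sum_smul_mem_of_sum_le_one h.convex h.zero_mem h.mem
  · intro e _
    have := hc e
    positivity
  · rw [← Finset.mul_sum, one_div, inv_mul_le_iff₀ (by positivity)]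
    linarith

lemma le_finrank [FiniteDimensional ℝ V] (h : LatticeGenerated N U E) {a : ℝ} (ha : 0 < a)
    (hfree : LatticeFree N U a) : a ≤ Module.finrank ℝ V := by
  by_contra! hlt
  obtain ⟨b, hbE, hbspan, hbind⟩ := exists_linearIndependent ℝ (E : Set V)
  have hbfin : b.Finite := E.finite_toSet.subset hbE
  lift b to Finset V using hbfin
  have hcard : b.card ≤ Module.finrank ℝ V := by
    have := hbind.fintype_card_le_finrank
    simpa using this
  have hcard' : (b.card : ℝ) ≤ Module.finrank ℝ V := by exact_mod_cast hcard
  have hmem := sum_smul_mem_algInterior h.convex h.zero_mem (E := b) (fun e he => h.mem e (hbE he))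
    (hbspan.trans h.span) (c := fun _ => 1 / a) (fun _ _ => by positivity) (by
      rw [Finset.sum_const, nsmul_eq_mul, mul_one_div, div_lt_one ha]
      linarith)
  refine hfree (∑ e ∈ b, e) (AddSubgroup.sum_mem _ fun e he => h.lat e (hbE he)) _ hmem ?_
  rw [Finset.smul_sum]
  refine Finset.sum_congr rfl fun e _ => ?_
  rw [smul_smul, mul_one_div, div_self ha.ne', one_smul]

lemma separated_le_one (h : LatticeGenerated N U E) {L : Submodule ℝ V} (hL : L ≠ ⊤) {x : ℝ}
    (hx : Separated N U L x) : x ≤ 1 := by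
  by_contra! hlt
  obtain ⟨e, heE, heL⟩ := h.exists_not_mem hL
  exact heL (hx e (h.lat e heE) 1 (by norm_num) hlt e (h.mem e heE) 0 h.zero_mem (by simp))

/-- Extension of a linear form which is nonnegative on the cone, from a subspace meeting the
interior of the cone. -/
lemma exists_extension (h : LatticeGenerated N U E) (L : Submodule ℝ V) (f : L →ₗ[ℝ] ℝ)
    (hf : ∀ x : L, (x : V) ∈ finCone E → 0 ≤ f x) {c : V} (hc : c ∈ algInterior U) (hcL : c ∈ L) :
    ∃ g : V →ₗ[ℝ] ℝ, (∀ x : L, g x = f x) ∧ ∀ e ∈ E, 0 ≤ g e := by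
  obtain ⟨g, hg, hg'⟩ := riesz_extension (finCone E) ⟨L, f⟩ (fun x hx => hf x hx) (by
    intro y
    obtain ⟨ε, hε, hy⟩ := hc y
    refine ⟨⟨ε⁻¹ • c, L.smul_mem _ hcL⟩, ?_⟩
    have := smul_mem_finCone (h.cone _ hy) (inv_nonneg.2 hε.le)
    rwa [smul_add, smul_smul, inv_mul_cancel₀ hε.ne', one_smul] at this)
  exact ⟨g, hg, fun e he => hg' e (mem_finCone_of_mem he)⟩

/-- A subspace missing the interior lies in the kernel of a nonzero nonnegative form. -/
lemma exists_supporting (h : LatticeGenerated N U E) (L : Submodule ℝ V)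
    (hL : ∀ x ∈ L, x ∉ algInterior U) :
    ∃ ψ : V →ₗ[ℝ] ℝ, ψ ≠ 0 ∧ (∀ x ∈ L, ψ x = 0) ∧ ∀ e ∈ E, 0 ≤ ψ e := by
  obtain ⟨c, hc⟩ := h.algInterior_nonempty
  have hcL : c ∉ L := fun hcL => hL c hcL hc
  let f₀ : V →ₗ.[ℝ] ℝ := ⟨L, 0⟩
  have key : ∀ y ∈ L, ∀ t : ℝ, ∀ hm, (f₀.supSpanSingleton c 1 hcL) ⟨y + t • c, hm⟩ = t := by
    intro y hy t hm
    have := LinearPMap.supSpanSingleton_apply_mk f₀ c (1 : ℝ) hcL y hy t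
    simp only [RingHom.id_apply, smul_eq_mul, mul_one] at this
    rw [this]
    simp [f₀]
  have hdom : ∀ y ∈ L, ∀ t : ℝ, y + t • c ∈ (f₀.supSpanSingleton c 1 hcL).domain := by
    intro y hy t
    exact Submodule.add_mem_sup hy (Submodule.smul_mem _ _ (Submodule.mem_span_singleton_self c))
  obtain ⟨g, hg, hg'⟩ := h.exists_extension (f₀.supSpanSingleton c 1 hcL).domain
    (f₀.supSpanSingleton c 1 hcL).toFun (by
      rintro ⟨x, hx⟩ hxE
      have hx' := hx
      rw [LinearPMap.domain_supSpanSingleton] at hx'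
      obtain ⟨y, hy, w, hw, rfl⟩ := Submodule.mem_sup.1 hx'
      obtain ⟨t, rfl⟩ := Submodule.mem_span_singleton.1 hw
      change 0 ≤ (f₀.supSpanSingleton c 1 hcL) _
      rw [key y hy t]
      by_contra! ht
      obtain ⟨r, hr, hrU⟩ := h.exists_smul_mem hxE
      have hpos : 0 < 1 - r * t := by nlinarith
      have hm := combo_mem_algInterior h.convex hc hrU (t := 1 / (1 - r * t)) (by positivity) (by
        rw [div_lt_one hpos]; nlinarith)
      refine hL ((r / (1 - r * t)) • y) (L.smul_mem _ hy) ?_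
      convert hm using 1
      have : 1 - 1 / (1 - r * t) = -(r * t) / (1 - r * t) := by field_simp; ring
      rw [this]
      simp only [smul_add, smul_smul, ← add_assoc]
      have e2 : 1 / (1 - r * t) * r = r / (1 - r * t) := by ring
      have e3 : 1 / (1 - r * t) * (r * t) = - (-(r * t) / (1 - r * t)) := by ring
      rw [e2, e3]
      module) hc (by simpa using hdom 0 L.zero_mem 1)
  have hgy : ∀ y ∈ L, ∀ t : ℝ, g (y + t • c) = t := by
    intro y hy t
    have := hg ⟨y + t • c, hdom y hy t⟩
    exact this.trans (key y hy t _)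
  refine ⟨g, ?_, ?_, hg'⟩
  · intro h0
    have := hgy 0 L.zero_mem 1
    simp [h0] at this
  · intro x hx
    simpa using hgy x hx 0

end LatticeGenerated

end Generation

section Separation

variable {V : Type} [AddCommGroup V] [Module ℝ V]
variable {N : AddSubgroup V} {U : Set V} {E : Finset V}

/-- A subgroup of `ℝ` generated by one nonnegative element if it is bounded away from zero. -/
lemma exists_generator_of_gap {G : AddSubgroup ℝ} {δ : ℝ} (hδ : 0 < δ)
    (hG : ∀ g ∈ G, g ≠ 0 → δ ≤ |g|) :
    ∃ c ∈ G, 0 ≤ c ∧ ∀ g ∈ G, ∃ k : ℤ, g = k * c := by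
  obtain ⟨b, hb⟩ := AddSubgroup.cyclic_of_isolated_zero (H := G) hδ (by
    rw [Set.disjoint_left]
    rintro g hg ⟨h1, h2⟩
    have := hG g hg h1.ne'
    rw [abs_of_pos h1] at this
    linarith)
  have hbG : b ∈ G := by rw [hb]; exact AddSubgroup.mem_closure_singleton_self b
  refine ⟨|b|, ?_, abs_nonneg b, ?_⟩
  · rcases abs_choice b with h | h <;> rw [h]
    · exact hbG
    · exact G.neg_mem hbG
  · intro g hg
    rw [hb, AddSubgroup.mem_closure_singleton] at hg
    obtain ⟨k, rfl⟩ := hg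
    rcases abs_choice b with h | h <;> rw [h]
    · exact ⟨k, by simp⟩
    · exact ⟨-k, by simp⟩

lemma Separated.le_abs {ψ : V →ₗ[ℝ] ℝ} {ω : ℝ} (hsep : Separated N U (LinearMap.ker ψ) ω)
    {z : V} (hz : z ∈ N) (hψz : ψ z ≠ 0) {u u' : V} (hu : u ∈ U) (hu' : u' ∈ U) (hω : 0 < ω) :
    ω * (ψ u - ψ u') ≤ |ψ z| := by
  by_contra! hlt
  have hD : 0 < ψ u - ψ u' := by
    by_contra! h
    have := abs_nonneg (ψ z)
    nlinarith
  wlog hpos : 0 ≤ ψ z generalizing z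
  · exact this (N.neg_mem hz) (by simpa using hψz) (by simpa using hlt)
      (by simp only [map_neg]; linarith)
  rw [abs_of_nonneg hpos] at hlt
  refine hψz (hsep z hz (ψ z / (ψ u - ψ u')) (by positivity) ?_ u hu u' hu' ?_)
  · rwa [div_lt_iff₀ hD]
  · simp only [LinearMap.mem_ker, map_sub, map_smul, smul_eq_mul]
    rw [div_mul_cancel₀ _ hD.ne', sub_self]

lemma Separated.exists_normalization (h : LatticeGenerated N U E) {ψ : V →ₗ[ℝ] ℝ} (hψ : ψ ≠ 0)
    {ω : ℝ} (hω : 0 < ω) (hsep : Separated N U (LinearMap.ker ψ) ω) :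
    ∃ c : ℝ, 0 < c ∧ (∀ z ∈ N, ∃ k : ℤ, ψ z = k * c) ∧
      ∀ u ∈ U, ∀ u' ∈ U, ψ u - ψ u' ≤ c / ω := by
  obtain ⟨e, heE, he⟩ := h.exists_apply_ne_zero hψ
  have habs : 0 < |ψ e| := abs_pos.2 he
  obtain ⟨c, hcG, hc0, hc⟩ := exists_generator_of_gap (G := N.map ψ.toAddMonoidHom)
    (δ := ω * |ψ e|) (by positivity) (by
      rintro _ ⟨z, hz, rfl⟩ hz0
      rcases abs_choice (ψ e) with h1 | h1 <;> rw [h1]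
      · simpa using hsep.le_abs hz hz0 (h.mem e heE) h.zero_mem hω
      · simpa using hsep.le_abs hz hz0 h.zero_mem (h.mem e heE) hω)
  have hcpos : 0 < c := by
    refine lt_of_le_of_ne hc0 fun h0 => he ?_
    obtain ⟨k, hk⟩ := hc (ψ e) ⟨e, h.lat e heE, rfl⟩
    rw [hk, ← h0, mul_zero]
  refine ⟨c, hcpos, fun z hz => hc _ ⟨z, hz, rfl⟩, ?_⟩
  intro u hu u' hu'
  obtain ⟨z, hz, hzc⟩ := hcG
  have hzc' : ψ z = c := hzc
  have := hsep.le_abs hz (by rw [hzc']; exact hcpos.ne') hu hu' hω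
  rw [hzc', abs_of_pos hcpos] at this
  rw [le_div_iff₀ hω]
  linarith

lemma Separated.hasIntegralForm (h : LatticeGenerated N U E) {ψ : V →ₗ[ℝ] ℝ} (hψ : ψ ≠ 0)
    (hpos : ∀ e ∈ E, 0 ≤ ψ e) {ω : ℝ} (hω : 0 < ω) (hsep : Separated N U (LinearMap.ker ψ) ω) :
    HasIntegralForm N U (1 / ω) := by
  obtain ⟨c, hc, hcN, hw⟩ := hsep.exists_normalization h hψ hω
  refine ⟨c⁻¹ • ψ, smul_ne_zero (inv_ne_zero hc.ne') hψ, ?_, ?_⟩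
  · intro z hz
    obtain ⟨k, hk⟩ := hcN z hz
    exact ⟨k, by simp only [LinearMap.smul_apply, smul_eq_mul, hk]; field_simp⟩
  · intro u hu
    have h0 := h.nonneg hpos u hu
    have h1 := hw u hu 0 h.zero_mem
    simp only [LinearMap.smul_apply, smul_eq_mul, map_zero, sub_zero] at h1 ⊢
    refine ⟨by positivity, ?_⟩
    rw [inv_mul_le_iff₀ hc]
    linarith [show c / ω = c * (1 / ω) by ring]

/-- Separation is kept, with a quadratic loss, when a lattice point of `U` is added. -/
lemma Separated.sup_span {L : Submodule ℝ V} (h : LatticeGenerated N U E) {x : ℝ} (hx0 : 0 < x)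
    (hx1 : x ≤ 1) (hsep : Separated N U L x) {e : V} (heN : e ∈ N) (heU : e ∈ U) :
    Separated N U (L ⊔ Submodule.span ℝ {e}) (x ^ 2 / 4) := by
  intro z hz μ hμ0 hμ v hv v' hv' hmem
  obtain ⟨ℓ, hℓ, w, hw, hsum⟩ := Submodule.mem_sup.1 hmem
  obtain ⟨s, rfl⟩ := Submodule.mem_span_singleton.1 hw
  set K := ⌊2 / x⌋₊ with hK
  have hKpos : 0 < K := Nat.floor_pos.2 (by rw [le_div_iff₀ hx0]; linarith)
  obtain ⟨j, k, hk0, hkK, hjk⟩ := Real.exists_int_int_abs_mul_sub_le s hKpos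
  have hk0' : (0 : ℝ) < k := by exact_mod_cast hk0
  have hkx : (k : ℝ) ≤ 2 / x := by
    have h1 : (k : ℝ) ≤ K := by exact_mod_cast hkK
    exact h1.trans (Nat.floor_le (by positivity))
  have hlt : |k * s - j| < x / 2 := by
    refine hjk.trans_lt ?_
    have := Nat.lt_floor_add_one (2 / x)
    rw [← hK] at this
    rw [div_lt_iff₀ (by positivity)]
    rw [div_lt_iff₀ hx0] at this
    linarith
  obtain ⟨p, hp, p', hp', hpp⟩ := exists_diff_combo h.convex heU h.zero_mem hv hv'
    (ν := k * μ) (κ := k * s - j)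
  have hkμ : k * μ < x / 2 := by
    calc k * μ < k * (x ^ 2 / 4) := by gcongr
      _ ≤ 2 / x * (x ^ 2 / 4) := by gcongr
      _ = x / 2 := by field_simp; norm_num
  have hkz : k • z - j • e ∈ L := by
    refine hsep _ (N.sub_mem (N.zsmul_mem hz k) (N.zsmul_mem heN j)) (|k * μ| + |k * s - j|)
      (by positivity) ?_ p hp p' hp' ?_
    · rw [abs_of_nonneg (by positivity : 0 ≤ k * μ)]
      linarith
    · rw [← hpp]
      have : k • z - j • e - ((k * μ) • (v - v') + (k * s - j) • (e - 0)) = (k : ℝ) • ℓ := by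
        have e1 : k • z = (k : ℝ) • z := (Int.cast_smul_eq_zsmul ℝ k z).symm
        have e2 : j • e = (j : ℝ) • e := (Int.cast_smul_eq_zsmul ℝ j e).symm
        have e3 : ℓ = z - μ • (v - v') - s • e := by rw [← hsum]; abel
        rw [e1, e2, e3]
        module
      rw [this]
      exact L.smul_mem _ hℓ
  have hz' : z = (k : ℝ)⁻¹ • (k • z - j • e) + ((k : ℝ)⁻¹ * j) • e := by
    rw [← Int.cast_smul_eq_zsmul ℝ k z, ← Int.cast_smul_eq_zsmul ℝ j e, smul_sub, smul_smul,
      inv_mul_cancel₀ hk0'.ne']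
    module
  rw [hz']
  exact Submodule.add_mem_sup (L.smul_mem _ hkz)
    (Submodule.smul_mem _ _ (Submodule.mem_span_singleton_self e))

/-- A supporting hyperplane properly containing `L` can be rotated about `L` until it contains a
further generator. -/
lemma LatticeGenerated.exists_supporting_sup [FiniteDimensional ℝ V] (h : LatticeGenerated N U E)
    {L : Submodule ℝ V} {ψ : V →ₗ[ℝ] ℝ} (hψ : ψ ≠ 0) (hpos : ∀ e ∈ E, 0 ≤ ψ e)
    (hlt : L < LinearMap.ker ψ) :
    ∃ ψ' : V →ₗ[ℝ] ℝ, ψ' ≠ 0 ∧ (∀ e ∈ E, 0 ≤ ψ' e) ∧ ∃ e ∈ E, e ∉ L ∧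
      L ⊔ Submodule.span ℝ {e} ≤ LinearMap.ker ψ' := by
  obtain ⟨w, hwψ, hwL⟩ := SetLike.exists_of_lt hlt
  obtain ⟨η₀, hη₀w, hη₀L⟩ := Submodule.exists_le_ker_of_notMem hwL
  obtain ⟨η, hηw, hηL, hηE⟩ : ∃ η : V →ₗ[ℝ] ℝ, η w ≠ 0 ∧ L ≤ LinearMap.ker η ∧
      ∃ e ∈ E, η e < 0 := by
    obtain ⟨e, heE, he⟩ := h.exists_apply_ne_zero (η := η₀) (by rintro rfl; simp at hη₀w)
    rcases lt_or_gt_of_ne he with he | he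
    · exact ⟨η₀, hη₀w, hη₀L, e, heE, he⟩
    · refine ⟨-η₀, by simpa using hη₀w, fun y hy => ?_, e, heE, by simpa using he⟩
      have := hη₀L hy
      rw [LinearMap.mem_ker] at this ⊢
      simp [this]
  obtain ⟨t, ht, e, heE, hηe, hzero, hnn⟩ := exists_push hpos hηE
  refine ⟨ψ + t • η, fun h0 => ?_, hnn, e, heE, fun heL => ?_, sup_le (fun y hy => ?_) ?_⟩
  · have hw0 : (ψ + t • η) w = 0 := by rw [h0]; rfl
    rw [LinearMap.mem_ker] at hwψ
    simp only [LinearMap.add_apply, hwψ, LinearMap.smul_apply, smul_eq_mul, zero_add] at hw0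
    rcases mul_eq_zero.1 hw0 with h1 | h1
    · rw [h1] at h0
      simp at h0
      exact hψ h0
    · exact hηw h1
  · have : η e = 0 := hηL heL
    linarith
  · have h1 : ψ y = 0 := hlt.le hy
    have h2 : η y = 0 := hηL hy
    simp [h1, h2]
  · rw [Submodule.span_singleton_le_iff_mem]
    exact hzero

/-- An integral form from a supporting hyperplane containing a separated subspace. -/
lemma Separated.hasIntegralForm_of_supporting [FiniteDimensional ℝ V]
    (h : LatticeGenerated N U E) (m : ℕ) :
    ∀ (L : Submodule ℝ V) (x : ℝ) (ψ : V →ₗ[ℝ] ℝ),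
      Module.finrank ℝ L + (m + 1) = Module.finrank ℝ V → 0 < x → Separated N U L x → ψ ≠ 0 →
      (∀ e ∈ E, 0 ≤ ψ e) → L ≤ LinearMap.ker ψ →
      HasIntegralForm N U (1 / (4 * (x / 4) ^ 2 ^ m)) := by
  induction m with
  | zero =>
    intro L x ψ hdim hx hsep hψ hpos hL
    have hker := Module.Dual.finrank_ker_add_one_of_ne_zero (f := ψ) hψ
    obtain rfl := Submodule.eq_of_le_of_finrank_eq hL (by omega)
    have := hsep.hasIntegralForm h hψ hpos hx
    convert this using 2
    ring
  | succ m ih =>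
    intro L x ψ hdim hx hsep hψ hpos hL
    have hker := Module.Dual.finrank_ker_add_one_of_ne_zero (f := ψ) hψ
    have hlt : L < LinearMap.ker ψ := by
      refine lt_of_le_of_ne hL fun heq => ?_
      rw [heq] at hdim
      change Module.finrank ℝ (LinearMap.ker ψ) + 1 = _ at hker
      omega
    obtain ⟨ψ', hψ', hpos', e, heE, heL, hle⟩ := h.exists_supporting_sup hψ hpos hlt
    have := ih (L ⊔ Submodule.span ℝ {e}) (x ^ 2 / 4) ψ'
      (by rw [Submodule.finrank_sup_span_singleton heL]; omega) (by positivity)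
      (hsep.sup_span h hx (h.separated_le_one (hlt.trans_le le_top).ne hsep) (h.lat e heE)
        (h.mem e heE)) hψ' hpos' hle
    have e1 : (x ^ 2 / 4 / 4) ^ 2 ^ m = (x / 4) ^ 2 ^ (m + 1) := by
      rw [pow_succ 2 m, mul_comm (2 ^ m) 2, pow_mul]
      congr 1
      ring
    rwa [e1] at this

/-- A lattice-free dilation yields a proper subspace from which the lattice is separated. -/
lemma exists_separated_of_latticeFree [FiniteDimensional ℝ V]
    (h : LatticeGenerated N U E) (m : ℕ) :
    ∀ (L : Submodule ℝ V) (t : V) (b β : ℝ), Module.finrank ℝ L + m = Module.finrank ℝ V →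
      0 < β → m * β ≤ b → 0 < b → (∀ z ∈ N, ∀ v ∈ algInterior U, z - t - b • v ∉ L) →
      ∃ L' : Submodule ℝ V, L' ≠ ⊤ ∧ ∃ x, β ≤ x ∧ Separated N U L' x ∧ (L' = L ∨ β < x) := by
  induction m with
  | zero =>
    intro L t b β hdim _ _ _ hP
    obtain ⟨c, hc⟩ := h.algInterior_nonempty
    have hL : L = ⊤ := Submodule.eq_top_of_finrank_eq (by omega)
    exact absurd (by rw [hL]; trivial) (hP 0 N.zero_mem c hc)
  | succ m ih =>
    intro L t b β hdim hβ hb hb0 hP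
    have hm : (0 : ℝ) < (m + 1 : ℕ) := by positivity
    have hβb : β ≤ b / (m + 1 : ℕ) := by rw [le_div_iff₀ hm]; linarith
    by_cases hsep : Separated N U L (b / (m + 1 : ℕ))
    · refine ⟨L, ?_, _, hβb, hsep, Or.inl rfl⟩
      rintro rfl
      simp at hdim
    unfold Separated at hsep
    push Not at hsep
    obtain ⟨z, hz, μ, hμ0, hμ, u, hu, u', hu', hmem, hzL⟩ := hsep
    obtain ⟨c, hc⟩ := h.algInterior_nonempty
    obtain ⟨ν, hμν, hνb⟩ := exists_between hμ
    have hν0 : 0 < ν := by linarith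
    set p := (1 - μ / ν) • c + (μ / ν) • u with hp
    set q := (1 - μ / ν) • c + (μ / ν) • u' with hq
    have hr : μ / ν < 1 := by rwa [div_lt_one hν0]
    have hpI : p ∈ algInterior U := combo_mem_algInterior h.convex hc hu (by positivity) hr
    have hqI : q ∈ algInterior U := combo_mem_algInterior h.convex hc hu' (by positivity) hr
    have hpq : ν • (p - q) = μ • (u - u') := by
      have : ν * (μ / ν) = μ := by field_simp
      rw [hp, hq]
      conv_rhs => rw [← this]
      module
    have hνb' : ν * (m + 1 : ℕ) < b := by rwa [lt_div_iff₀ hm] at hνb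
    have hνltb : ν < b := by
      push_cast at hνb'
      nlinarith [(Nat.cast_nonneg m : (0 : ℝ) ≤ m)]
    have hP' : ∀ z' ∈ N, ∀ v ∈ algInterior U,
        z' - (t + ν • q) - (b - ν) • v ∉ L ⊔ Submodule.span ℝ {z} := by
      intro z' hz' v hv hmem'
      obtain ⟨ℓ, hℓ, w, hw, hsum⟩ := Submodule.mem_sup.1 hmem'
      obtain ⟨s, rfl⟩ := Submodule.mem_span_singleton.1 hw
      set θ := Int.fract s with hθ
      have hθ0 : 0 ≤ θ := Int.fract_nonneg s
      have hθ1 : θ < 1 := Int.fract_lt_one s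
      have hs : s = ⌊s⌋ + θ := (Int.floor_add_fract s).symm
      set y := (ν * (1 - θ) / b) • q + (ν * θ / b) • p + ((b - ν) / b) • v with hy
      have hyI : y ∈ algInterior U := by
        have h1 := convex_algInterior h.convex hqI hpI (a := 1 - θ) (b := θ) (by linarith) hθ0
          (by ring)
        have h2 := convex_algInterior h.convex h1 hv (a := ν / b) (b := (b - ν) / b)
          (by positivity) (div_nonneg (by linarith) hb0.le) (by field_simp; ring)
        convert h2 using 1
        rw [hy]
        module
      refine hP (z' - ⌊s⌋ • z) (N.sub_mem hz' (N.zsmul_mem hz _)) y hyI ?_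
      have hby : b • y = (ν * (1 - θ)) • q + (ν * θ) • p + (b - ν) • v := by
        rw [hy]
        simp only [smul_add, smul_smul, mul_div_cancel₀ _ hb0.ne']
      have hfin : z' - ⌊s⌋ • z - t - b • y = ℓ + θ • (z - μ • (u - u')) := by
        rw [hby, ← Int.cast_smul_eq_zsmul ℝ ⌊s⌋ z, ← hpq]
        have e1 : ℓ = z' - (t + ν • q) - (b - ν) • v - s • z := by rw [← hsum]; abel
        rw [e1]
        nth_rewrite 2 [hs]
        module
      rw [hfin]
      exact L.add_mem hℓ (L.smul_mem _ hmem)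
    have hdim' : Module.finrank ℝ (L ⊔ Submodule.span ℝ {z} : Submodule ℝ V) + m
        = Module.finrank ℝ V := by
      rw [Submodule.finrank_sup_span_singleton hzL]
      omega
    obtain ⟨β', hββ', hβ'⟩ : ∃ β', β < β' ∧ m * β' ≤ b - ν := by
      rcases Nat.eq_zero_or_pos m with rfl | hmpos
      · exact ⟨β + 1, by linarith, by simp; linarith⟩
      · have hm' : (0 : ℝ) < m := by exact_mod_cast hmpos
        refine ⟨(b - ν) / m, ?_, by field_simp; rfl⟩
        rw [lt_div_iff₀ hm']
        push_cast at hνb' hb hνb hm hβb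
        have h1 : β * (m + 1) ≤ b := by linarith
        rw [lt_div_iff₀ (by positivity)] at hνb
        nlinarith
    obtain ⟨L', hL', x, hx, hsep', -⟩ := ih _ (t + ν • q) (b - ν) β' hdim' (hβ.trans hββ') hβ'
      (by linarith) hP'
    exact ⟨L', hL', x, hββ'.le.trans hx, hsep', Or.inr (hββ'.trans_le hx)⟩

end Separation

lemma gammaFn_add_two (n : ℕ) (a : ℝ) :
    gammaFn (n + 2) a = gammaFn (n + 1) ((a / (n + 2 : ℕ)) ^ 2) := by
  rw [gammaFn]
  congr 1
  push_cast
  rw [div_pow]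

lemma gammaFn_pos (n : ℕ) : ∀ a : ℝ, 0 < a → 0 < gammaFn n a := by
  induction n using Nat.twoStepInduction with
  | zero => exact fun a ha => ha
  | one => exact fun a ha => ha
  | more n _ ih =>
    intro a ha
    rw [gammaFn_add_two]
    exact ih _ (by positivity)

lemma gammaFn_mono (n : ℕ) : ∀ a b : ℝ, 0 < a → a ≤ b → gammaFn n a ≤ gammaFn n b := by
  induction n using Nat.twoStepInduction with
  | zero => exact fun a b _ hab => hab
  | one => exact fun a b _ hab => hab
  | more n _ ih =>
    intro a b ha hab
    rw [gammaFn_add_two, gammaFn_add_two]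
    exact ih _ _ (by positivity) (by gcongr)

/-- The main bound in dimension `n`. -/
def FormBound (n : ℕ) : Prop :=
  ∀ (V : Type) [AddCommGroup V] [Module ℝ V] [FiniteDimensional ℝ V] (N : AddSubgroup V)
    (U : Set V) (E : Finset V) (a : ℝ), Module.finrank ℝ V = n → LatticeGenerated N U E → 0 < a →
    LatticeFree N U a → HasIntegralForm N U (1 / gammaFn n a)

section Quotient

variable {V : Type} [AddCommGroup V] [Module ℝ V]
variable {N : AddSubgroup V} {U : Set V} {E : Finset V}

open Classical in
lemma LatticeGenerated.map {W : Type} [AddCommGroup W] [Module ℝ W] (h : LatticeGenerated N U E)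
    (f : V →ₗ[ℝ] W) (hf : Function.Surjective f) :
    LatticeGenerated (N.map f.toAddMonoidHom) (f '' U) (E.image f) where
  convex := h.convex.linear_image f
  zero_mem := ⟨0, h.zero_mem, map_zero f⟩
  lat := by
    intro y hy
    obtain ⟨e, he, rfl⟩ := Finset.mem_image.1 hy
    exact ⟨e, h.lat e he, rfl⟩
  mem := by
    intro y hy
    obtain ⟨e, he, rfl⟩ := Finset.mem_image.1 hy
    exact ⟨e, h.mem e he, rfl⟩
  span := by
    rw [Finset.coe_image, Submodule.span_image, h.span, Submodule.map_top,
      LinearMap.range_eq_top.2 hf]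
  cone := by
    rintro _ ⟨u, hu, rfl⟩
    obtain ⟨c, hc, rfl⟩ := h.cone u hu
    rw [map_sum]
    change _ ∈ finCone (E.image f)
    refine Submodule.sum_mem _ fun e he => ?_
    rw [map_smul]
    exact smul_mem_finCone (mem_finCone_of_mem (Finset.mem_image_of_mem f he)) (hc e)

lemma LatticeFree.quotient (h : LatticeGenerated N U E) {a α : ℝ} (hα : 0 < α) (hα1 : α ≤ 1)
    (haα : 2 * α ≤ a) (hfree : LatticeFree N U a) (hsep : Separated N U ⊥ α) {e : V}
    (heN : e ∈ N) (heU : e ∈ U) {ψ : V →ₗ[ℝ] ℝ} (hψ : ψ ≠ 0) (hpos : ∀ u ∈ U, 0 ≤ ψ u)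
    (hψe : ψ e = 0) :
    LatticeFree (N.map (Submodule.mkQ (Submodule.span ℝ {e})).toAddMonoidHom)
      (Submodule.mkQ (Submodule.span ℝ {e}) '' U) (α ^ 2) := by
  rintro _ ⟨z, hz, rfl⟩ v' hv' heq
  have ha : 0 < a := by linarith
  obtain ⟨v, hv, rfl⟩ := exists_of_mem_algInterior_image h.convex h.algInterior_nonempty _ hv'
  have hmem : z - α ^ 2 • v ∈ Submodule.span ℝ {e} := by
    rw [← Submodule.ker_mkQ (Submodule.span ℝ {e}), LinearMap.mem_ker, map_sub, map_smul, sub_eq_zero]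
    exact heq
  obtain ⟨s, hs⟩ := Submodule.mem_span_singleton.1 hmem
  set K := ⌊1 / α⌋₊ with hK
  have hKpos : 0 < K := Nat.floor_pos.2 (by rwa [le_div_iff₀ hα, one_mul])
  obtain ⟨j, k, hk0, hkK, hjk⟩ := Real.exists_int_int_abs_mul_sub_le s hKpos
  have hk0' : (0 : ℝ) < k := by exact_mod_cast hk0
  have hkα : (k : ℝ) * α ≤ 1 := by
    have h1 : (k : ℝ) ≤ K := by exact_mod_cast hkK
    rw [← le_div_iff₀ hα]
    exact h1.trans (Nat.floor_le (by positivity))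
  have hlt : |k * s - j| < α := by
    refine hjk.trans_lt ?_
    have := Nat.lt_floor_add_one (1 / α)
    rw [← hK] at this
    rw [div_lt_iff₀ (by positivity)]
    rw [div_lt_iff₀ hα] at this
    linarith
  set δ := k * s - j with hδ
  set p := k * α ^ 2 with hp
  have hp0 : 0 < p := by positivity
  have hpα : p ≤ α := by rw [hp]; nlinarith
  have hkz : k • z - j • e = p • v + δ • e := by
    have e1 : z = α ^ 2 • v + s • e := by rw [hs]; abel
    rw [← Int.cast_smul_eq_zsmul ℝ k z, ← Int.cast_smul_eq_zsmul ℝ j e, hδ, hp]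
    nth_rewrite 1 [e1]
    module
  have hN : k • z - j • e ∈ N := N.sub_mem (N.zsmul_mem hz k) (N.zsmul_mem heN j)
  rcases le_or_gt 0 δ with hδ0 | hδ0
  · rw [abs_of_nonneg hδ0] at hlt
    have hpδ : 0 < p + δ := by linarith
    have h1 := combo_mem_algInterior h.convex hv heU (t := δ / (p + δ)) (by positivity)
      (by rw [div_lt_one hpδ]; linarith)
    have h2 := smul_mem_algInterior h.convex h.zero_mem h1 (t := (p + δ) / a) (by positivity)
      (by rw [div_le_one ha]; linarith)
    refine hfree _ hN _ h2 ?_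
    rw [hkz, smul_smul, mul_div_cancel₀ _ ha.ne', smul_add, smul_smul, smul_smul,
      mul_div_cancel₀ _ hpδ.ne']
    congr 2
    field_simp
    ring
  · obtain ⟨ε, hε, hvε⟩ := hv v
    have hvε' : (1 + ε) • v ∈ U := by rwa [add_smul, one_smul]
    set μ := max (p / (1 + ε)) |δ| with hμ
    have hμpos : 0 < μ := lt_max_of_lt_right (abs_pos.2 hδ0.ne)
    have hμα : μ < α := max_lt (by rw [div_lt_iff₀ (by positivity)]; nlinarith) hlt
    have hw := smul_mem_of_convex h.convex h.zero_mem hvε' (t := p / (1 + ε) / μ) (by positivity)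
      (by rw [div_le_one hμpos]; exact le_max_left _ _)
    have hw' := smul_mem_of_convex h.convex h.zero_mem heU (t := |δ| / μ) (by positivity)
      (by rw [div_le_one hμpos]; exact le_max_right _ _)
    have h0 := hsep _ hN μ hμpos.le hμα _ hw _ hw' (by
      rw [hkz, smul_sub, smul_smul, smul_smul, smul_smul, mul_div_cancel₀ _ hμpos.ne',
        mul_div_cancel₀ _ hμpos.ne', div_mul_cancel₀ _ (by positivity), abs_of_neg hδ0]
      rw [Submodule.mem_bot]
      module)
    rw [Submodule.mem_bot, hkz] at h0
    have h1 := congrArg ψ h0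
    simp only [map_add, map_smul, hψe, smul_eq_mul, mul_zero, add_zero, map_zero] at h1
    have := pos_of_mem_algInterior hψ hpos hv
    have := mul_pos hp0 this
    linarith

lemma LatticeFree.zero_notMem {a : ℝ} (hfree : LatticeFree N U a) : (0 : V) ∉ algInterior U :=
  fun h0 => hfree 0 N.zero_mem 0 h0 (by simp)

/-- The case in which the lattice is separated from the origin. -/
lemma hasIntegralForm_of_separated_bot [FiniteDimensional ℝ V] (h : LatticeGenerated N U E) {n : ℕ}
    (hdim : Module.finrank ℝ V = n + 2) (ih : FormBound (n + 1)) {a : ℝ} (ha : 0 < a)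
    (hfree : LatticeFree N U a) (hsep : Separated N U ⊥ (a / (n + 2 : ℕ))) :
    HasIntegralForm N U (1 / gammaFn (n + 2) a) := by
  classical
  have hn : (0 : ℝ) < (n + 2 : ℕ) := by positivity
  obtain ⟨ψ₀, hψ₀, -, hpos₀⟩ := h.exists_supporting ⊥ (by
    intro x hx
    rw [(Submodule.mem_bot ℝ).1 hx]
    exact hfree.zero_notMem)
  have hlt : (⊥ : Submodule ℝ V) < LinearMap.ker ψ₀ := by
    rw [bot_lt_iff_ne_bot]
    intro hbot
    have hker := Module.Dual.finrank_ker_add_one_of_ne_zero (f := ψ₀) hψ₀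
    change Module.finrank ℝ (LinearMap.ker ψ₀) + 1 = _ at hker
    rw [hbot, finrank_bot] at hker
    omega
  obtain ⟨ψ, hψ, hpos, e, heE, he0, hle⟩ := h.exists_supporting_sup hψ₀ hpos₀ hlt
  have hψe : ψ e = 0 := hle (by simp [Submodule.mem_span_singleton_self])
  have hle := h.le_finrank ha hfree
  rw [hdim] at hle
  have hfree' := hfree.quotient h (α := a / (n + 2 : ℕ)) (by positivity)
    (by rwa [div_le_one hn]) (by
      rw [mul_div_assoc', div_le_iff₀ hn]
      push_cast
      nlinarith [(Nat.cast_nonneg n : (0 : ℝ) ≤ n)]) hsep (h.lat e heE) (h.mem e heE) hψ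
    (h.nonneg hpos) hψe
  have hmap := h.map (Submodule.mkQ (Submodule.span ℝ {e})) (Submodule.mkQ_surjective _)
  have hdim' : Module.finrank ℝ (V ⧸ Submodule.span ℝ {e}) = n + 1 := by
    have h1 := Submodule.finrank_quotient_add_finrank (Submodule.span ℝ {e})
    rw [finrank_span_singleton (by simpa using he0)] at h1
    omega
  obtain ⟨φ, hφ, hφN, hφU⟩ := ih _ _ _ _ _ hdim' hmap (by positivity) hfree'
  rw [gammaFn_add_two]
  refine ⟨φ ∘ₗ Submodule.mkQ _, fun h0 => hφ ?_, fun z hz => hφN _ ⟨z, hz, rfl⟩,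
    fun u hu => hφU _ ⟨u, hu, rfl⟩⟩
  ext x
  exact LinearMap.congr_fun h0 x

end Quotient

section Slices

variable {V : Type} [AddCommGroup V] [Module ℝ V]
variable {N : AddSubgroup V} {U : Set V} {E : Finset V}

/-- A subspace from which the lattice is separated is contained in such a hyperplane. -/
lemma Separated.exists_hyperplane [FiniteDimensional ℝ V] (h : LatticeGenerated N U E) (m : ℕ) :
    ∀ (L : Submodule ℝ V) (x y : ℝ), Module.finrank ℝ L + (m + 1) = Module.finrank ℝ V →
      0 < y → y < x → Separated N U L x →
      ∃ ψ : V →ₗ[ℝ] ℝ, ψ ≠ 0 ∧ L ≤ LinearMap.ker ψ ∧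
        Separated N U (LinearMap.ker ψ) (y / 2 ^ m) := by
  induction m with
  | zero =>
    intro L x y hdim hy hyx hsep
    have hL : L < ⊤ := by
      rw [lt_top_iff_ne_top]
      rintro rfl
      simp at hdim
    obtain ⟨ψ, hψ, hle⟩ := Submodule.exists_le_ker_of_lt_top L hL
    have hker := Module.Dual.finrank_ker_add_one_of_ne_zero (f := ψ) hψ
    have heq : L = LinearMap.ker ψ := Submodule.eq_of_le_of_finrank_eq hle (by
      change Module.finrank ℝ (LinearMap.ker ψ) + 1 = _ at hker
      omega)
    refine ⟨ψ, hψ, hle, ?_⟩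
    rw [← heq]
    exact hsep.mono (by simpa using hyx.le)
  | succ m ih =>
    intro L x y hdim hy hyx hsep
    have hL : L ≠ ⊤ := by
      rintro rfl
      simp at hdim
    have hx : 0 < x := hy.trans hyx
    obtain ⟨x', hyx', hx'x⟩ := exists_between hyx
    have hx' : 0 < x' := hy.trans hyx'
    set S := {s : ℝ | Separated N U L s} with hS
    have hbdd : BddAbove S := ⟨1, fun s hs => h.separated_le_one hL hs⟩
    have hxS : x ∈ S := hsep
    have hsup : x ≤ sSup S := le_csSup hbdd hxS
    have hrpos : 0 < 2 - x' / x := by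
      have : x' / x < 1 := by rwa [div_lt_one hx]
      linarith
    have hr1 : 1 < 2 - x' / x := by
      have : x' / x < 1 := by rwa [div_lt_one hx]
      linarith
    obtain ⟨s₁, hs₁, hlt₁⟩ := exists_lt_of_lt_csSup ⟨x, hxS⟩
      (show sSup S / (2 - x' / x) < sSup S by
        rw [div_lt_iff₀ hrpos]
        nlinarith)
    obtain ⟨s, hs, hxs, hlt⟩ : ∃ s ∈ S, x ≤ s ∧ sSup S / (2 - x' / x) < s := by
      rcases le_total x s₁ with h1 | h1
      · exact ⟨s₁, hs₁, h1, hlt₁⟩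
      · exact ⟨x, hxS, le_rfl, hlt₁.trans_le h1⟩
    have hnot : ¬ Separated N U L ((2 - x' / x) * s) := by
      intro hcon
      have := le_csSup hbdd (show (2 - x' / x) * s ∈ S from hcon)
      rw [div_lt_iff₀ hrpos] at hlt
      linarith
    unfold Separated at hnot
    push Not at hnot
    obtain ⟨z, hz, μ, hμ0, hμ, v, hv, v', hv', hmem, hzL⟩ := hnot
    have hsep' : Separated N U (L ⊔ Submodule.span ℝ {z}) (x' / 2) := by
      intro z' hz' κ hκ0 hκ w hw w' hw' hmem'
      obtain ⟨ℓ, hℓ, q, hq, hsum⟩ := Submodule.mem_sup.1 hmem'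
      obtain ⟨r, rfl⟩ := Submodule.mem_span_singleton.1 hq
      have hround := abs_sub_round r
      obtain ⟨p, hp, p', hp', hpp⟩ := exists_diff_combo h.convex hw hw' hv hv'
        (ν := (r - round r) * μ) (κ := κ)
      have hin : z' - round r • z ∈ L := by
        refine hs _ (N.sub_mem hz' (N.zsmul_mem hz _)) (|(r - round r) * μ| + |κ|)
          (by positivity) ?_ p hp p' hp' ?_
        · rw [abs_mul, abs_of_nonneg hμ0, abs_of_nonneg hκ0]
          have h1 : |r - round r| * μ ≤ 1 / 2 * μ := by gcongr
          have h2 : x' / x * s ≥ x' := by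
            rw [ge_iff_le, div_mul_eq_mul_div, le_div_iff₀ hx]
            gcongr
          linarith
        · rw [← hpp]
          have : z' - round r • z - (((r - round r) * μ) • (v - v') + κ • (w - w'))
              = ℓ + (r - round r) • (z - μ • (v - v')) := by
            have e1 : ℓ = z' - κ • (w - w') - r • z := by rw [← hsum]; abel
            rw [e1, ← Int.cast_smul_eq_zsmul ℝ (round r) z]
            module
          rw [this]
          exact L.add_mem hℓ (L.smul_mem _ hmem)
      have : z' = (z' - round r • z) + (round r : ℝ) • z := by
        rw [Int.cast_smul_eq_zsmul]
        abel
      rw [this]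
      exact Submodule.add_mem_sup hin
        (Submodule.smul_mem _ _ (Submodule.mem_span_singleton_self z))
    obtain ⟨ψ, hψ, hle, hψsep⟩ := ih (L ⊔ Submodule.span ℝ {z}) (x' / 2) (y / 2)
      (by rw [Submodule.finrank_sup_span_singleton hzL]; omega) (by positivity) (by linarith) hsep'
    refine ⟨ψ, hψ, le_sup_left.trans hle, ?_⟩
    rwa [div_div, ← pow_succ'] at hψsep

lemma mem_finCone_subtype {L : Submodule ℝ V} {E₀ : Finset V} [DecidablePred (· ∈ L)]
    (hE₀ : ∀ e ∈ E₀, e ∈ L) {y : L} (hy : (y : V) ∈ finCone E₀) :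
    y ∈ finCone (E₀.subtype (· ∈ L)) := by
  obtain ⟨c, hc, hsum⟩ := hy
  refine ⟨fun v => c v, fun v => hc v, Subtype.ext ?_⟩
  rw [hsum, AddSubmonoidClass.coe_finsetSum]
  exact (Finset.sum_subtype_of_mem (fun e => c e • e) hE₀).symm

lemma LatticeGenerated.slice (h : LatticeGenerated N U E) (L : Submodule ℝ V)
    [DecidablePred (· ∈ L)] {c : V} (hc : c ∈ algInterior U) (hcL : c ∈ L) {r : ℝ} (hr : 0 < r)
    {E₀ : Finset V} (hE₀L : ∀ e ∈ E₀, e ∈ L) (hE₀N : ∀ e ∈ E₀, e ∈ N)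
    (hE₀U : ∀ e ∈ E₀, ∃ u ∈ U, e = r • u) (hcone : ∀ u ∈ U, u ∈ L → u ∈ finCone E₀) :
    LatticeGenerated (N.comap L.subtype.toAddMonoidHom) (r • {y : L | (y : V) ∈ U})
      (E₀.subtype (· ∈ L)) := by
  have hcone' : ∀ y : L, (y : V) ∈ U → y ∈ finCone (E₀.subtype (· ∈ L)) :=
    fun y hy => mem_finCone_subtype hE₀L (hcone y hy y.2)
  have hspan : ∀ y : L, (y : V) ∈ U → y ∈ Submodule.span ℝ (E₀.subtype (· ∈ L) : Set L) := by
    intro y hy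
    obtain ⟨c, -, hc⟩ := hcone' y hy
    rw [hc]
    exact Submodule.sum_mem _ fun e he => Submodule.smul_mem _ _ (Submodule.subset_span he)
  refine ⟨(h.convex.linear_preimage L.subtype).smul r, ?_, ?_, ?_, ?_, ?_⟩
  · exact ⟨0, h.zero_mem, smul_zero r⟩
  · intro e he
    exact hE₀N _ (Finset.mem_subtype.1 he)
  · intro e he
    obtain ⟨u, hu, hue⟩ := hE₀U _ (Finset.mem_subtype.1 he)
    have huL : u ∈ L := by
      have : u = r⁻¹ • (e : V) := by rw [hue, smul_smul, inv_mul_cancel₀ hr.ne', one_smul]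
      rw [this]
      exact L.smul_mem _ e.2
    exact ⟨⟨u, huL⟩, hu, Subtype.ext hue.symm⟩
  · rw [eq_top_iff]
    intro v _
    obtain ⟨ε, hε, hv⟩ := hc v
    have h1 := hspan ⟨c + ε • (v : V), L.add_mem hcL (L.smul_mem _ v.2)⟩ hv
    have h2 := hspan ⟨c, hcL⟩ (mem_of_mem_algInterior hc)
    have h3 := Submodule.smul_mem _ ε⁻¹ (Submodule.sub_mem _ h1 h2)
    convert h3 using 1
    apply Subtype.ext
    simp only [Submodule.coe_smul, Submodule.coe_sub, add_sub_cancel_left, smul_smul,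
      inv_mul_cancel₀ hε.ne', one_smul]
  · rintro _ ⟨y, hy, rfl⟩
    exact smul_mem_finCone (hcone' y hy) hr.le

lemma LatticeFree.slice (h : LatticeGenerated N U E) {a : ℝ} (hfree : LatticeFree N U a)
    (L : Submodule ℝ V) {c : V} (hc : c ∈ algInterior U) (hcL : c ∈ L) {r : ℝ} (hr : 0 < r) :
    LatticeFree (N.comap L.subtype.toAddMonoidHom) (r • {y : L | (y : V) ∈ U}) (a / r) := by
  intro z hz v hv hzv
  obtain ⟨y, hy, rfl⟩ := mem_smul_algInterior hr hv
  refine hfree z hz y (algInterior_slice h.convex L hc hcL hy) ?_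
  rw [hzv, smul_smul, div_mul_cancel₀ _ hr.ne', Submodule.coe_smul]

/-- The inductive bound applied to a linear slice of `U`, extended to the whole space. -/
lemma FormBound.exists_extension [FiniteDimensional ℝ V] {n : ℕ} (ih : FormBound n)
    (h : LatticeGenerated N U E) {a : ℝ} (ha : 0 < a) (hfree : LatticeFree N U a)
    (L : Submodule ℝ V) (hdim : Module.finrank ℝ L = n) {c : V} (hc : c ∈ algInterior U)
    (hcL : c ∈ L) {r : ℝ} (hr : 0 < r)
    {E₀ : Finset V} (hE₀L : ∀ e ∈ E₀, e ∈ L) (hE₀N : ∀ e ∈ E₀, e ∈ N)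
    (hE₀U : ∀ e ∈ E₀, ∃ u ∈ U, e = r • u) (hcone : ∀ u ∈ U, u ∈ L → u ∈ finCone E₀) :
    ∃ ψ : V →ₗ[ℝ] ℝ, (∃ x ∈ L, ψ x ≠ 0) ∧ (∀ e ∈ E, 0 ≤ ψ e) ∧
      (∀ z ∈ N, z ∈ L → ∃ k : ℤ, ψ z = k) ∧
      ∀ u ∈ U, u ∈ L → r * ψ u ≤ 1 / gammaFn n (a / r) := by
  classical
  obtain ⟨φ, hφ, hφN, hφU⟩ := ih L _ _ _ _ hdim (h.slice L hc hcL hr hE₀L hE₀N hE₀U hcone)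
    (by positivity) (hfree.slice h L hc hcL hr)
  have hφU' : ∀ y : L, (y : V) ∈ U → 0 ≤ r * φ y ∧ r * φ y ≤ 1 / gammaFn n (a / r) := by
    intro y hy
    have := hφU (r • y) ⟨y, hy, rfl⟩
    simpa using this
  obtain ⟨ψ, hψ, hψE⟩ := h.exists_extension L φ (by
    intro y hy
    obtain ⟨s, hs, hsU⟩ := h.exists_smul_mem hy
    have := (hφU' (s • y) hsU).1
    rw [map_smul, smul_eq_mul, ← mul_assoc] at this
    exact nonneg_of_mul_nonneg_right this (by positivity)) hc hcL
  refine ⟨ψ, ?_, hψE, ?_, ?_⟩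
  · by_contra! hcon
    apply hφ
    ext y
    rw [← hψ y]
    exact hcon y y.2
  · intro z hz hzL
    obtain ⟨k, hk⟩ := hφN ⟨z, hzL⟩ hz
    exact ⟨k, (hψ ⟨z, hzL⟩).trans hk⟩
  · intro u hu huL
    rw [hψ ⟨u, huL⟩]
    exact (hφU' ⟨u, huL⟩ hu).2

end Slices

section Mixing

variable {V : Type} [AddCommGroup V] [Module ℝ V]
variable {N : AddSubgroup V} {U : Set V} {E : Finset V}

/-- Elimination of one integral form `φ` from a form integral on its kernel. -/
lemma hasIntegralForm_of_endpoint (h : LatticeGenerated N U E) {φ ψ : V →ₗ[ℝ] ℝ} {W B : ℝ}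
    (hφN : ∀ z ∈ N, ∃ k : ℤ, φ z = k) (hφU : ∀ u ∈ U, ∀ u' ∈ U, φ u - φ u' ≤ W)
    (hψ : ψ ≠ 0) (hψE : ∀ e ∈ E, 0 ≤ ψ e) (hψN : ∀ z ∈ N, φ z = 0 → ∃ k : ℤ, ψ z = k)
    (hψU : ∀ u ∈ U, φ u = 0 → W * ψ u ≤ B) {p q : V} (hp : p ∈ E) (hq : q ∈ E)
    (hψp : ψ p = 0) (hφp : 0 < φ p) (hφq : φ q < 0) (hpq : φ p ≤ -φ q) :
    HasIntegralForm N U B := by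
  have hcomb : ∀ u ∈ U, ∀ u' ∈ U, ∀ s t : ℝ, 0 ≤ s → 0 ≤ t → 0 < s + t → s + t ≤ W →
      s * φ u + t * φ u' = 0 → s * ψ u + t * ψ u' ≤ B := by
    intro u hu u' hu' s t hs ht hst hstW h0
    have hmem := h.convex hu hu' (a := s / (s + t)) (b := t / (s + t)) (by positivity)
      (by positivity) (by field_simp)
    have h1 := hψU _ hmem (by
      simp only [map_add, map_smul, smul_eq_mul]
      field_simp
      linarith)
    simp only [map_add, map_smul, smul_eq_mul] at h1
    have hu1 := h.nonneg hψE u hu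
    have hu2 := h.nonneg hψE u' hu'
    have h2 : (s + t) * (s / (s + t) * ψ u + t / (s + t) * ψ u') = s * ψ u + t * ψ u' := by
      field_simp
    rw [← h2]
    refine le_trans ?_ h1
    gcongr
  refine ⟨φ p • ψ, smul_ne_zero hφp.ne' hψ, ?_, ?_⟩
  · intro z hz
    obtain ⟨k, hk⟩ := hφN p (h.lat p hp)
    obtain ⟨l, hl⟩ := hφN z hz
    obtain ⟨r, hr⟩ := hψN (k • z - l • p)
      (N.sub_mem (N.zsmul_mem hz k) (N.zsmul_mem (h.lat p hp) l)) (by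
        rw [map_sub, map_zsmul, map_zsmul, hk, hl]
        simp [mul_comm])
    refine ⟨r, ?_⟩
    rw [← hr, map_sub, map_zsmul, map_zsmul, hψp, LinearMap.smul_apply, hk]
    simp
  · intro u hu
    have hψu := h.nonneg hψE u hu
    simp only [LinearMap.smul_apply, smul_eq_mul]
    refine ⟨by positivity, ?_⟩
    rcases le_or_gt (φ u) 0 with hneg | hpos
    · have := hcomb u hu p (h.mem p hp) (φ p) (-φ u) hφp.le (by linarith) (by linarith)
        (by linarith [hφU p (h.mem p hp) u hu]) (by ring)
      rw [hψp] at this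
      linarith
    · have := hcomb u hu q (h.mem q hq) (-φ q) (φ u) (by linarith) hpos.le (by linarith)
        (by linarith [hφU u hu q (h.mem q hq)]) (by ring)
      have hψq := hψE q hq
      nlinarith

/-- Pairwise elimination of a linear form generates the slice of a cone by its kernel. -/
lemma mem_finCone_ker [DecidableEq V] (φ : V →ₗ[ℝ] ℝ) {y : V} (hy : y ∈ finCone E)
    (hφy : φ y = 0) {E₀ : Finset V}
    (hpair : ∀ p ∈ E, ∀ q ∈ E, 0 < φ p → φ q < 0 → (-φ q) • p + φ p • q ∈ E₀)
    (hzero : ∀ e ∈ E, φ e = 0 → e ∈ E₀) : y ∈ finCone E₀ := by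
  obtain ⟨c, hc, rfl⟩ := hy
  set P := E.filter fun e => 0 < φ e with hP
  set Q := E.filter fun e => φ e < 0 with hQ
  set Z := E.filter fun e => φ e = 0 with hZ
  have hsplit : ∀ {A : Type} [AddCommGroup A] (f : V → A),
      ∑ e ∈ E, f e = ∑ e ∈ P, f e + ∑ e ∈ Q, f e + ∑ e ∈ Z, f e := by
    intro A _ f
    rw [hP, hQ, hZ, Finset.sum_filter, Finset.sum_filter, Finset.sum_filter,
      ← Finset.sum_add_distrib, ← Finset.sum_add_distrib]
    refine Finset.sum_congr rfl fun e _ => ?_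
    rcases lt_trichotomy (φ e) 0 with h | h | h
    · simp [h, h.ne, not_lt.2 h.le]
    · simp [h]
    · simp [h, h.ne', not_lt.2 h.le]
  set T := ∑ e ∈ P, c e * φ e with hT
  have hTQ : T = ∑ e ∈ Q, c e * (-φ e) := by
    rw [map_sum, hsplit] at hφy
    simp only [map_smul, smul_eq_mul] at hφy
    have hZ0 : ∑ e ∈ Z, c e * φ e = 0 :=
      Finset.sum_eq_zero fun e he => by rw [(Finset.mem_filter.1 he).2, mul_zero]
    simp only [mul_neg, Finset.sum_neg_distrib]
    linarith
  have hT0 : 0 ≤ T := Finset.sum_nonneg fun e he =>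
    mul_nonneg (hc e) (Finset.mem_filter.1 he).2.le
  have hPc : ∀ p ∈ P, c p * T / T = c p := by
    intro p hp
    rcases eq_or_ne T 0 with h0 | h0
    · have := (Finset.sum_eq_zero_iff_of_nonneg fun e he =>
        mul_nonneg (hc e) (Finset.mem_filter.1 he).2.le).1 h0 p hp
      rcases mul_eq_zero.1 this with h1 | h1
      · simp [h1]
      · exact absurd h1 (Finset.mem_filter.1 hp).2.ne'
    · field_simp
  have hQc : ∀ q ∈ Q, c q * T / T = c q := by
    intro q hq
    rcases eq_or_ne T 0 with h0 | h0
    · rw [hTQ] at h0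
      have := (Finset.sum_eq_zero_iff_of_nonneg fun e he =>
        mul_nonneg (hc e) (neg_nonneg.2 (Finset.mem_filter.1 he).2.le)).1 h0 q hq
      rcases mul_eq_zero.1 this with h1 | h1
      · simp [h1]
      · exact absurd (neg_eq_zero.1 h1) (Finset.mem_filter.1 hq).2.ne
    · field_simp
  have hmain : ∑ e ∈ P, c e • e + ∑ e ∈ Q, c e • e
      = ∑ p ∈ P, ∑ q ∈ Q, (c p * c q / T) • ((-φ q) • p + φ p • q) := by
    simp only [smul_add, Finset.sum_add_distrib]
    congr 1
    · refine Finset.sum_congr rfl fun p hp => ?_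
      simp only [smul_smul]
      rw [← Finset.sum_smul]
      congr 1
      rw [← hPc p hp]
      nth_rewrite 1 [hTQ]
      rw [Finset.mul_sum, Finset.sum_div]
      refine Finset.sum_congr rfl fun q _ => ?_
      rw [hPc p hp]
      ring
    · rw [Finset.sum_comm]
      refine Finset.sum_congr rfl fun q hq => ?_
      simp only [smul_smul]
      rw [← Finset.sum_smul]
      congr 1
      have h1 : ∑ p ∈ P, c p * c q / T * φ p = c q / T * ∑ p ∈ P, c p * φ p := by
        rw [Finset.mul_sum]
        exact Finset.sum_congr rfl fun p _ => by ring
      rw [h1, ← hT, div_mul_eq_mul_div, hQc q hq]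
  rw [hsplit, hmain]
  refine Submodule.add_mem _ (Submodule.sum_mem _ fun p hp => Submodule.sum_mem _ fun q hq => ?_)
    (Submodule.sum_mem _ fun e he => ?_)
  · have hp' := Finset.mem_filter.1 hp
    have hq' := Finset.mem_filter.1 hq
    exact smul_mem_finCone (mem_finCone_of_mem (hpair p hp'.1 q hq'.1 hp'.2 hq'.2))
      (div_nonneg (mul_nonneg (hc p) (hc q)) hT0)
  · have he' := Finset.mem_filter.1 he
    exact smul_mem_finCone (mem_finCone_of_mem (hzero e he'.1 he'.2)) (hc e)

/-- The inductive step through an integral form of width `W` changing sign on `U`. -/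
lemma hasIntegralForm_of_width [FiniteDimensional ℝ V] {n : ℕ} (ih : FormBound n)
    (h : LatticeGenerated N U E) (hdim : Module.finrank ℝ V = n + 1) {a : ℝ} (ha : 0 < a)
    (hfree : LatticeFree N U a) {φ : V →ₗ[ℝ] ℝ} (hφ : φ ≠ 0)
    (hφN : ∀ z ∈ N, ∃ k : ℤ, φ z = k) {W : ℝ} (hφU : ∀ u ∈ U, ∀ u' ∈ U, φ u - φ u' ≤ W)
    {c : V} (hc : c ∈ algInterior U) (hφc : φ c = 0) :
    HasIntegralForm N U (1 / gammaFn n (a / W)) := by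
  classical
  have hexists : ∀ η : V →ₗ[ℝ] ℝ, η ≠ 0 → η c = 0 → ∃ e ∈ E, η e < 0 := by
    intro η hη hηc
    by_contra! hcon
    have := pos_of_mem_algInterior hη (h.nonneg hcon) hc
    linarith
  obtain ⟨q₀, hq₀, hφq₀⟩ := hexists φ hφ hφc
  obtain ⟨p₀, hp₀, hφp₀⟩ := hexists (-φ) (neg_ne_zero.2 hφ) (by simp [hφc])
  simp only [LinearMap.neg_apply, neg_lt_zero] at hφp₀
  have hW : 1 ≤ W := by
    obtain ⟨k, hk⟩ := hφN p₀ (h.lat _ hp₀)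
    have h1 := hφU p₀ (h.mem _ hp₀) 0 h.zero_mem
    rw [hk] at hφp₀ h1
    have h2 : (1 : ℝ) ≤ k := by
      have h3 : 0 < k := by exact_mod_cast hφp₀
      exact_mod_cast h3
    simp only [map_zero, sub_zero] at h1
    linarith
  have hW0 : 0 < W := by linarith
  set E₀ : Finset V := (((E.filter fun e => 0 < φ e) ×ˢ (E.filter fun e => φ e < 0)).image
    fun x => (-φ x.2) • x.1 + φ x.1 • x.2) ∪ E.filter (fun e => φ e = 0) with hE₀
  have hmemE₀ : ∀ e ∈ E₀, (∃ p ∈ E, ∃ q ∈ E, 0 < φ p ∧ φ q < 0 ∧ (-φ q) • p + φ p • q = e) ∨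
      (e ∈ E ∧ φ e = 0) := by
    intro e he
    rcases Finset.mem_union.1 he with h1 | h1
    · obtain ⟨⟨p, q⟩, hpq, rfl⟩ := Finset.mem_image.1 h1
      simp only [Finset.mem_product, Finset.mem_filter] at hpq
      exact Or.inl ⟨p, hpq.1.1, q, hpq.2.1, hpq.1.2, hpq.2.2, rfl⟩
    · exact Or.inr (Finset.mem_filter.1 h1)
  have hker := Module.Dual.finrank_ker_add_one_of_ne_zero (f := φ) hφ
  obtain ⟨ψ, ⟨x, hxker, hψx⟩, hψE, hψN, hψU⟩ := ih.exists_extension h ha hfree (LinearMap.ker φ)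
    (by change Module.finrank ℝ (LinearMap.ker φ) + 1 = _ at hker; omega) hc hφc hW0 (E₀ := E₀) (by
      intro e he
      rcases hmemE₀ e he with ⟨p, -, q, -, -, -, rfl⟩ | ⟨-, h0⟩
      · simp [mul_comm]
      · exact h0) (by
      intro e he
      rcases hmemE₀ e he with ⟨p, hp, q, hq, -, -, rfl⟩ | ⟨h0, -⟩
      · obtain ⟨k, hk⟩ := hφN p (h.lat _ hp)
        obtain ⟨l, hl⟩ := hφN q (h.lat _ hq)
        rw [hk, hl, neg_smul, Int.cast_smul_eq_zsmul, Int.cast_smul_eq_zsmul]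
        exact N.add_mem (N.neg_mem (N.zsmul_mem (h.lat _ hp) _)) (N.zsmul_mem (h.lat _ hq) _)
      · exact h.lat _ h0) (by
      intro e he
      rcases hmemE₀ e he with ⟨p, hp, q, hq, hφp, hφq, rfl⟩ | ⟨h0, -⟩
      · have hsum : 0 < φ p - φ q := by linarith
        have h1 := h.convex (h.mem p hp) (h.mem q hq) (a := -φ q / (φ p - φ q))
          (b := φ p / (φ p - φ q)) (div_nonneg (by linarith) hsum.le) (by positivity)
          (by field_simp; ring)
        refine ⟨_, smul_mem_of_convex h.convex h.zero_mem h1 (t := (φ p - φ q) / W)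
          (by positivity) (by rw [div_le_one hW0]; exact hφU _ (h.mem _ hp) _ (h.mem _ hq)), ?_⟩
        rw [smul_smul, mul_div_cancel₀ _ hW0.ne', smul_add, smul_smul, smul_smul,
          mul_div_cancel₀ _ hsum.ne', mul_div_cancel₀ _ hsum.ne']
      · refine ⟨W⁻¹ • e, smul_mem_of_convex h.convex h.zero_mem (h.mem _ h0) (by positivity)
          (inv_le_one_of_one_le₀ hW), ?_⟩
        rw [smul_smul, mul_inv_cancel₀ hW0.ne', one_smul]) (by
      intro u hu huker
      refine mem_finCone_ker φ (h.cone u hu) huker (fun p hp q hq hφp hφq => ?_)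
        (fun e he h0 => ?_)
      · refine Finset.mem_union_left _ (Finset.mem_image.2 ⟨(p, q), ?_, rfl⟩)
        simp [hp, hq, hφp, hφq]
      · exact Finset.mem_union_right _ (Finset.mem_filter.2 ⟨he, h0⟩))
  have hker0 : ∀ t : ℝ, ∀ η : V →ₗ[ℝ] ℝ, (η = φ ∨ η = -φ) → ∀ z, φ z = 0 →
      (ψ + t • η) z = ψ z := by
    rintro t η (rfl | rfl) z hz <;> simp [hz]
  have hne : ∀ t : ℝ, ∀ η : V →ₗ[ℝ] ℝ, (η = φ ∨ η = -φ) → ψ + t • η ≠ 0 := by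
    intro t η hη h0
    apply hψx
    rw [← hker0 t η hη x hxker, h0, LinearMap.zero_apply]
  obtain ⟨s, -, p, hp, hηp, hzp, hnp⟩ := exists_push (η := -φ) hψE ⟨p₀, hp₀, by simpa using hφp₀⟩
  obtain ⟨t, -, q, hq, hηq, hzq, hnq⟩ := exists_push (η := φ) hψE ⟨q₀, hq₀, hφq₀⟩
  simp only [LinearMap.neg_apply, neg_lt_zero] at hηp
  rcases le_total (φ p) (-φ q) with hle | hle
  · refine hasIntegralForm_of_endpoint h hφN hφU (hne s (-φ) (Or.inr rfl)) hnp ?_ ?_ hp hq hzp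
      hηp hηq hle
    · intro z hz hz0
      rw [hker0 s _ (Or.inr rfl) z hz0]
      exact hψN z hz hz0
    · intro u hu hu0
      rw [hker0 s _ (Or.inr rfl) u hu0]
      exact hψU u hu hu0
  · refine hasIntegralForm_of_endpoint h (φ := -φ) (W := W) ?_ ?_ (hne t φ (Or.inl rfl)) hnq ?_ ?_ hq hp
      hzq (by simpa using hηq) (by simpa using hηp) (by simpa using hle)
    · intro z hz
      obtain ⟨k, hk⟩ := hφN z hz
      exact ⟨-k, by simp [hk]⟩
    · intro u hu u' hu'
      have := hφU u' hu' u hu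
      simp only [LinearMap.neg_apply]
      linarith
    · intro z hz hz0
      have hz0' : φ z = 0 := by simpa using hz0
      rw [hker0 t _ (Or.inl rfl) z hz0']
      exact hψN z hz hz0'
    · intro u hu hu0
      have hu0' : φ u = 0 := by simpa using hu0
      rw [hker0 t _ (Or.inl rfl) u hu0']
      exact hψU u hu hu0'

end Mixing

section Approximation

/-- Dirichlet's simultaneous approximation theorem. -/
lemma exists_simultaneous_approx {ι : Type} (T : Finset ι) (f : ι → ℝ) {K : ℕ} (hK : 0 < K) :
    ∃ n : ℕ, 0 < n ∧ n ≤ K ^ T.card ∧ ∃ p : ι → ℤ, ∀ j ∈ T, |n * f j - p j| ≤ 1 / K := by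
  classical
  have hK' : (0 : ℝ) < K := by exact_mod_cast hK
  set g : ℕ → T → Fin K := fun n j => ⟨⌊Int.fract (n * f j) * K⌋₊, by
    rw [Nat.floor_lt (by positivity)]
    nlinarith [Int.fract_lt_one (n * f j)]⟩ with hg
  obtain ⟨n₁, hn₁, n₂, hn₂, hne, heq⟩ := Finset.exists_ne_map_eq_of_card_lt_of_maps_to
    (s := Finset.range (K ^ T.card + 1)) (t := (Finset.univ : Finset (T → Fin K)))
    (by simp) (f := g) (by intro x _; simp)
  wlog hlt : n₁ < n₂ generalizing n₁ n₂
  · exact this n₂ hn₂ n₁ hn₁ hne.symm heq.symm (by omega)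
  simp only [Finset.mem_range] at hn₂
  refine ⟨n₂ - n₁, by omega, by omega, fun j => ⌊(n₂ : ℝ) * f j⌋ - ⌊(n₁ : ℝ) * f j⌋, ?_⟩
  intro j hj
  have h1 := congrArg Fin.val (congrFun heq ⟨j, hj⟩)
  simp only [hg] at h1
  have a1 := Nat.floor_le (a := Int.fract (n₁ * f j) * K) (by positivity)
  have a2 := Nat.lt_floor_add_one (Int.fract (n₁ * f j) * K)
  have b1 := Nat.floor_le (a := Int.fract (n₂ * f j) * K) (by positivity)
  have b2 := Nat.lt_floor_add_one (Int.fract (n₂ * f j) * K)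
  rw [h1] at a1 a2
  have e1 : ((n₂ - n₁ : ℕ) : ℝ) * f j - ((⌊(n₂ : ℝ) * f j⌋ - ⌊(n₁ : ℝ) * f j⌋ : ℤ) : ℝ)
      = Int.fract (n₂ * f j) - Int.fract (n₁ * f j) := by
    rw [Nat.cast_sub hlt.le, Int.cast_sub, Int.fract, Int.fract]
    ring
  rw [e1, abs_le, ← neg_div, div_le_iff₀ hK', le_div_iff₀ hK', sub_mul]
  constructor <;> linarith

end Approximation

section Circuits

variable {V : Type} [AddCommGroup V] [Module ℝ V]
variable {N : AddSubgroup V} {U : Set V} {E : Finset V}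

lemma exists_sum_eq_smul_sub (h : LatticeGenerated N U E) {T : Finset V} (hT : T ⊆ E)
    (δ : V → ℝ) : ∃ v ∈ U, ∃ v' ∈ U, ∑ e ∈ T, δ e • e = (∑ e ∈ T, |δ e|) • (v - v') := by
  classical
  induction T using Finset.induction_on with
  | empty => exact ⟨0, h.zero_mem, 0, h.zero_mem, by simp⟩
  | insert e T he ih =>
    obtain ⟨v, hv, v', hv', heq⟩ := ih ((Finset.subset_insert _ _).trans hT)
    obtain ⟨w, hw, w', hw', h2⟩ := exists_diff_combo h.convex
      (h.mem e (hT (Finset.mem_insert_self _ _))) h.zero_mem hv hv' (ν := ∑ e ∈ T, |δ e|) (κ := δ e)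
    refine ⟨w, hw, w', hw', ?_⟩
    rw [Finset.sum_insert he, Finset.sum_insert he, heq, abs_of_nonneg
      (Finset.sum_nonneg fun i _ => abs_nonneg (δ i))] at *
    rw [add_comm |δ e|, ← h2, sub_zero, add_comm]

lemma Separated.mem_of_add_sum_mem (h : LatticeGenerated N U E) {L : Submodule ℝ V} {x : ℝ}
    (hsep : Separated N U L x) {z : V} (hz : z ∈ N) {T : Finset V} (hT : T ⊆ E) {δ : V → ℝ}
    {κ : ℝ} {u : V} (hu : u ∈ U) (hs : ∑ e ∈ T, |δ e| + |κ| < x)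
    (hmem : z + (∑ e ∈ T, δ e • e + κ • u) ∈ L) : z ∈ L := by
  obtain ⟨v, hv, v', hv', heq⟩ := exists_sum_eq_smul_sub h hT δ
  obtain ⟨w, hw, w', hw', h2⟩ := exists_diff_combo h.convex hu h.zero_mem hv hv'
    (ν := ∑ e ∈ T, |δ e|) (κ := κ)
  have h0 : 0 ≤ ∑ e ∈ T, |δ e| := Finset.sum_nonneg fun i _ => abs_nonneg (δ i)
  rw [abs_of_nonneg h0, sub_zero] at h2
  refine hsep z hz (∑ e ∈ T, |δ e| + |κ|) (by positivity) hs w' hw' w hw ?_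
  rw [heq, h2] at hmem
  convert hmem using 1
  module

lemma LatticeGenerated.exists_sum_eq_smul (h : LatticeGenerated N U E) {T : Finset V} (hT : T ⊆ E)
    {c : V → ℝ} (hc : ∀ e ∈ T, 0 ≤ c e) {r : ℝ} (hr : 0 < r) (hcr : ∑ e ∈ T, c e ≤ r) :
    ∃ u ∈ U, ∑ e ∈ T, c e • e = r • u := by
  refine ⟨∑ e ∈ T, (c e / r) • e, sum_smul_mem_of_sum_le_one h.convex h.zero_mem
    (fun e he => h.mem e (hT he)) (fun e he => div_nonneg (hc e he) hr.le) ?_, ?_⟩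
  · rw [← Finset.sum_div]
    exact (div_le_one hr).2 hcr
  · rw [Finset.smul_sum]
    refine Finset.sum_congr rfl fun e _ => ?_
    rw [smul_smul, mul_div_cancel₀ _ hr.ne']

/-- A finite set is linearly independent modulo `L`. -/
def IndepMod (L : Submodule ℝ V) (T : Finset V) : Prop :=
  ∀ ρ : V → ℝ, ∑ e ∈ T, ρ e • e ∈ L → ∀ e ∈ T, ρ e = 0

lemma IndepMod.card_le [FiniteDimensional ℝ V] {L : Submodule ℝ V} {T : Finset V}
    (hT : IndepMod L T) : T.card + Module.finrank ℝ L ≤ Module.finrank ℝ V := by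
  have h1 : LinearIndepOn ℝ (fun e => L.mkQ e) (T : Set V) := by
    rw [linearIndepOn_finset_iff]
    intro f hf
    refine hT f ?_
    rw [← L.ker_mkQ, LinearMap.mem_ker, map_sum]
    simpa using hf
  have h2 := LinearIndependent.fintype_card_le_finrank h1
  have h3 := Submodule.finrank_quotient_add_finrank L
  simp only [Finset.coe_sort_coe, Fintype.card_coe] at h2
  omega

/-- A relation modulo `L` all of whose proper parts are independent has, after rescaling, bounded
integral coefficients. -/
lemma Separated.exists_integral_relation [FiniteDimensional ℝ V] (h : LatticeGenerated N U E)
    {L : Submodule ℝ V} {m : ℕ} (hdim : Module.finrank ℝ L + m = Module.finrank ℝ V) {x : ℝ}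
    (hsep : Separated N U L x) {K : ℕ} (hK : 0 < K) (hKx : (m : ℝ) < K * x)
    {T : Finset V} (hT : T ⊆ E) (hTn : T.Nonempty) {μ : V → ℝ} (hμ : ∀ e ∈ T, 0 < μ e)
    (hμL : ∑ e ∈ T, μ e • e ∈ L)
    (hmin : ∀ ρ : V → ℝ, ∑ e ∈ T, ρ e • e ∈ L → ∀ e₀ ∈ T, ρ e₀ = 0 → ∀ e ∈ T, ρ e = 0) :
    ∃ t : ℝ, 0 < t ∧ ∃ p : V → ℕ, (∀ e ∈ T, t * μ e = p e) ∧ ∑ e ∈ T, p e ≤ (m + 1) * K ^ m := by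
  classical
  obtain ⟨e₀, he₀, hmax⟩ := T.exists_max_image μ hTn
  have hμ₀ := hμ e₀ he₀
  set T' := T.erase e₀ with hT'
  have hsum : ∀ f : V → V, ∑ e ∈ T, f e = f e₀ + ∑ e ∈ T', f e :=
    fun f => (Finset.add_sum_erase T f he₀).symm
  have hind : IndepMod L T' := by
    intro ρ hρ e he
    have := hmin (fun v => if v = e₀ then 0 else ρ v) (by
      rw [hsum]
      simp only [if_true, zero_smul, zero_add]
      convert hρ using 1
      refine Finset.sum_congr rfl fun e he => ?_
      rw [if_neg (Finset.ne_of_mem_erase he)]) e₀ he₀ (by simp) e (Finset.mem_of_mem_erase he)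
    simpa [Finset.ne_of_mem_erase he] using this
  have hcard : T'.card ≤ m := by have := hind.card_le; omega
  obtain ⟨n, hn, hnK, p, hp⟩ := exists_simultaneous_approx T' (fun e => μ e / μ e₀) hK
  have hn' : (0 : ℝ) < n := by exact_mod_cast hn
  have hK' : (0 : ℝ) < K := by exact_mod_cast hK
  set δ : V → ℝ := fun e => n * (μ e / μ e₀) - p e with hδ
  have hmem : ((n : ℤ) • e₀ + ∑ e ∈ T', p e • e) + (∑ e ∈ T', δ e • e + (0 : ℝ) • (0 : V)) ∈ L := by
    have := L.smul_mem (n / μ e₀) hμL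
    rw [hsum, smul_add, Finset.smul_sum, smul_smul, div_mul_cancel₀ _ hμ₀.ne'] at this
    convert this using 1
    rw [add_assoc, smul_zero, add_zero, ← Finset.sum_add_distrib]
    congr 1
    · simp [Nat.cast_smul_eq_nsmul]
    · refine Finset.sum_congr rfl fun e _ => ?_
      rw [← Int.cast_smul_eq_zsmul ℝ, ← add_smul, smul_smul]
      congr 1
      simp only [hδ]
      ring
  have hzL := hsep.mem_of_add_sum_mem h (N.add_mem (N.zsmul_mem (h.lat e₀ (hT he₀)) n)
    (N.sum_mem fun e he => N.zsmul_mem (h.lat e (hT (Finset.mem_of_mem_erase he))) (p e)))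
    ((Finset.erase_subset _ _).trans hT) h.zero_mem (by
      rw [abs_zero, add_zero]
      calc ∑ e ∈ T', |δ e| ≤ T'.card • (1 / K : ℝ) := Finset.sum_le_card_nsmul _ _ _ hp
        _ ≤ m * (1 / K : ℝ) := by
          rw [nsmul_eq_mul]
          gcongr
        _ < x := by
          rw [mul_one_div, div_lt_iff₀ hK']
          linarith) hmem
  have hδ0 : ∀ e ∈ T', δ e = 0 := hind δ (by
    have := L.sub_mem hmem hzL
    rwa [add_sub_cancel_left, smul_zero, add_zero] at this)
  have hpe : ∀ e ∈ T, n / μ e₀ * μ e = (if e = e₀ then n else (p e).toNat : ℕ) := by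
    intro e he
    split_ifs with h1
    · rw [h1]
      field_simp
    · have h2 := hδ0 e (Finset.mem_erase.2 ⟨h1, he⟩)
      simp only [hδ] at h2
      have h3 : n / μ e₀ * μ e = p e := by
        rw [← sub_eq_zero, ← h2]
        ring
      have h4 : (0 : ℝ) ≤ p e := by
        rw [← h3]
        have := hμ e he
        positivity
      have h5 : 0 ≤ p e := by exact_mod_cast h4
      rw [h3]
      exact_mod_cast (Int.toNat_of_nonneg h5).symm
  refine ⟨n / μ e₀, by positivity, fun e => if e = e₀ then n else (p e).toNat, hpe, ?_⟩
  have hle : ∀ e ∈ T, (if e = e₀ then n else (p e).toNat : ℕ) ≤ n := by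
    intro e he
    have h1 := hpe e he
    have h2 : n / μ e₀ * μ e ≤ n := by
      rw [div_mul_eq_mul_div, div_le_iff₀ hμ₀]
      exact mul_le_mul_of_nonneg_left (hmax e he) hn'.le
    rw [h1] at h2
    exact_mod_cast h2
  have hTcard : T.card ≤ m + 1 := by
    have := Finset.card_erase_add_one he₀
    rw [← hT'] at this
    omega
  calc ∑ e ∈ T, (if e = e₀ then n else (p e).toNat : ℕ) ≤ T.card • n :=
        Finset.sum_le_card_nsmul _ _ _ hle
    _ ≤ (m + 1) * K ^ m := by
      rw [smul_eq_mul]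
      exact Nat.mul_le_mul hTcard (hnK.trans (Nat.pow_le_pow_right hK hcard))

end Circuits

section Decomposition

/-- Subtract a multiple of `ρ` from positive weights until one of the weights vanishes. -/
lemma exists_reduction {ι : Type} {T : Finset ι} {μ ρ : ι → ℝ} (hμ : ∀ e ∈ T, 0 < μ e)
    (hρ : ∃ e ∈ T, 0 < ρ e) :
    ∃ t : ℝ, 0 < t ∧ (∀ e ∈ T, 0 ≤ μ e - t * ρ e) ∧ ∃ e ∈ T, μ e - t * ρ e = 0 := by
  classical
  obtain ⟨e₁, he₁, h₁⟩ := hρ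
  obtain ⟨e₀, he₀, hmin⟩ := Finset.exists_min_image (T.filter fun e => 0 < ρ e)
    (fun e => μ e / ρ e) ⟨e₁, by simp [he₁, h₁]⟩
  simp only [Finset.mem_filter] at he₀ hmin
  have h₀ := hμ e₀ he₀.1
  have ht : 0 < μ e₀ / ρ e₀ := div_pos h₀ he₀.2
  refine ⟨μ e₀ / ρ e₀, ht, fun e he => ?_, e₀, he₀.1, ?_⟩
  · have := hμ e he
    rcases lt_or_ge 0 (ρ e) with h | h
    · have h2 := hmin e ⟨he, h⟩
      rw [le_div_iff₀ h] at h2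
      linarith
    · nlinarith
  · rw [div_mul_cancel₀ _ he₀.2.ne', sub_self]

variable {V : Type} [AddCommGroup V] [Module ℝ V]
variable {N : AddSubgroup V} {U : Set V} {E : Finset V}

lemma sum_filter_pos_smul (T : Finset V) {ν : V → ℝ} (hν : ∀ e ∈ T, 0 ≤ ν e)
    [DecidablePred fun e => 0 < ν e] :
    ∑ e ∈ T.filter (fun e => 0 < ν e), ν e • e = ∑ e ∈ T, ν e • e := by
  refine Finset.sum_filter_of_ne fun e he hne => lt_of_le_of_ne (hν e he) fun h0 => hne ?_
  rw [← h0, zero_smul]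

/-- Nonnegative relations modulo `L` of minimal support. -/
lemma exists_minimal_relation {L : Submodule ℝ V} {S : Finset V} (hS : S.Nonempty) {c : V → ℝ}
    (hc : ∀ e ∈ S, 0 < c e) (hcL : ∑ e ∈ S, c e • e ∈ L) :
    ∃ T ⊆ S, T.Nonempty ∧ ∃ μ : V → ℝ, (∀ e ∈ T, 0 < μ e) ∧ ∑ e ∈ T, μ e • e ∈ L ∧
      ∀ ρ : V → ℝ, ∑ e ∈ T, ρ e • e ∈ L → ∀ e₀ ∈ T, ρ e₀ = 0 → ∀ e ∈ T, ρ e = 0 := by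
  classical
  obtain ⟨T, hT, hmin⟩ := Finset.exists_min_image (S.powerset.filter fun T => T.Nonempty ∧
    ∃ μ : V → ℝ, (∀ e ∈ T, 0 < μ e) ∧ ∑ e ∈ T, μ e • e ∈ L) Finset.card
    ⟨S, by simp only [Finset.mem_filter, Finset.mem_powerset]; exact ⟨subset_rfl, hS, c, hc, hcL⟩⟩
  simp only [Finset.mem_filter, Finset.mem_powerset] at hT hmin
  obtain ⟨hTS, hTn, μ, hμ, hμL⟩ := hT
  have key : ∀ ρ : V → ℝ, ∑ e ∈ T, ρ e • e ∈ L → ∀ e₀ ∈ T, ρ e₀ = 0 → ¬ ∃ e ∈ T, 0 < ρ e := by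
    intro ρ hρ e₀ he₀ h₀ hex
    obtain ⟨t, -, hnn, e', he', hz⟩ := exists_reduction hμ hex
    have := hmin (T.filter fun e => 0 < μ e - t * ρ e)
      ⟨(Finset.filter_subset _ _).trans hTS, ⟨e₀, by simp [he₀, h₀, hμ e₀ he₀]⟩,
        fun e => μ e - t * ρ e, by simp, by
          rw [sum_filter_pos_smul T hnn]
          have := L.sub_mem hμL (L.smul_mem t hρ)
          rw [Finset.smul_sum, ← Finset.sum_sub_distrib] at this
          convert this using 2
          rw [sub_smul, smul_smul]⟩
    have h2 : (T.filter fun e => 0 < μ e - t * ρ e).card < T.card :=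
      Finset.card_lt_card (Finset.filter_ssubset.2 ⟨e', he', by simp [hz]⟩)
    omega
  refine ⟨T, hTS, hTn, μ, hμ, hμL, fun ρ hρ e₀ he₀ h₀ e he => ?_⟩
  have h1 := key ρ hρ e₀ he₀ h₀
  have h2 := key (-ρ) (by simpa using L.neg_mem hρ) e₀ he₀ (by simp [h₀])
  push Not at h1 h2
  have h3 := h2 e he
  simp only [Pi.neg_apply] at h3
  linarith [h1 e he]

/-- The part of the cone over `E` inside `L` is generated by bounded integral combinations. -/
lemma Separated.mem_finCone_of_relations [FiniteDimensional ℝ V] (h : LatticeGenerated N U E)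
    {L : Submodule ℝ V} {m : ℕ} (hdim : Module.finrank ℝ L + m = Module.finrank ℝ V) {x : ℝ}
    (hsep : Separated N U L x) {K : ℕ} (hK : 0 < K) (hKx : (m : ℝ) < K * x) {E₀ : Finset V}
    (hE₀ : ∀ p : V → ℕ, ∑ e ∈ E, p e ≤ (m + 1) * K ^ m → ∑ e ∈ E, (p e : ℝ) • e ∈ L →
      ∑ e ∈ E, (p e : ℝ) • e ∈ E₀) {y : V} (hy : y ∈ finCone E) (hyL : y ∈ L) :
    y ∈ finCone E₀ := by
  classical
  suffices H : ∀ n : ℕ, ∀ S ⊆ E, S.card = n → ∀ c : V → ℝ, (∀ e ∈ S, 0 < c e) →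
      ∑ e ∈ S, c e • e ∈ L → ∑ e ∈ S, c e • e ∈ finCone E₀ by
    obtain ⟨c, hc, rfl⟩ := hy
    rw [← sum_filter_pos_smul E fun e _ => hc e] at hyL ⊢
    exact H _ _ (Finset.filter_subset _ _) rfl c (by simp) hyL
  intro n
  induction n using Nat.strong_induction_on with
  | _ n ih =>
  intro S hSE hSn c hc hcL
  rcases S.eq_empty_or_nonempty with rfl | hSne
  · simp
  obtain ⟨T, hTS, hTn, μ, hμ, hμL, hmin⟩ := exists_minimal_relation hSne hc hcL
  obtain ⟨s, hs, p, hp, hpsum⟩ := hsep.exists_integral_relation h hdim hK hKx (hTS.trans hSE) hTn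
    hμ hμL hmin
  have hp₀ : ∑ e ∈ E, ((if e ∈ T then p e else 0 : ℕ) : ℝ) • e = s • ∑ e ∈ T, μ e • e := by
    rw [Finset.smul_sum]
    simp only [Nat.cast_ite, Nat.cast_zero, ite_smul, zero_smul]
    rw [← Finset.sum_filter, Finset.filter_mem_eq_inter, Finset.inter_eq_right.2 (hTS.trans hSE)]
    refine Finset.sum_congr rfl fun e he => ?_
    rw [← hp e he, smul_smul]
  have hμE₀ : ∑ e ∈ T, μ e • e ∈ finCone E₀ := by
    have h1 := hE₀ (fun e => if e ∈ T then p e else 0) (by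
      rwa [← Finset.sum_filter, Finset.filter_mem_eq_inter,
        Finset.inter_eq_right.2 (hTS.trans hSE)]) (by
      rw [hp₀]
      exact L.smul_mem s hμL)
    rw [hp₀] at h1
    have h2 := smul_mem_finCone (mem_finCone_of_mem h1) (inv_nonneg.2 hs.le)
    rwa [smul_smul, inv_mul_cancel₀ hs.ne', one_smul] at h2
  set ρ : V → ℝ := fun e => if e ∈ T then μ e else 0 with hρ
  have hρsum : ∑ e ∈ S, ρ e • e = ∑ e ∈ T, μ e • e := by
    simp only [hρ, ite_smul, zero_smul]
    rw [← Finset.sum_filter, Finset.filter_mem_eq_inter, Finset.inter_eq_right.2 hTS]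
  obtain ⟨e₁, he₁⟩ := hTn
  obtain ⟨t, ht, hnn, e', he', hz⟩ := exists_reduction (ρ := ρ) hc
    ⟨e₁, hTS he₁, by simp [hρ, he₁, hμ e₁ he₁]⟩
  have hsplit : ∑ e ∈ S, c e • e = ∑ e ∈ S, (c e - t * ρ e) • e + t • ∑ e ∈ T, μ e • e := by
    rw [← hρsum, Finset.smul_sum, ← Finset.sum_add_distrib]
    refine Finset.sum_congr rfl fun e _ => ?_
    rw [smul_smul, ← add_smul, sub_add_cancel]
  rw [hsplit]
  refine Submodule.add_mem _ ?_ (smul_mem_finCone hμE₀ ht.le)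
  rw [← sum_filter_pos_smul S hnn]
  refine ih _ ?_ _ ((Finset.filter_subset _ _).trans hSE) rfl _ (by simp) ?_
  · rw [← hSn]
    exact Finset.card_lt_card (Finset.filter_ssubset.2 ⟨e', he', by simp [hz]⟩)
  · rw [sum_filter_pos_smul S hnn]
    have h3 := L.sub_mem hcL (L.smul_mem t hμL)
    rwa [hsplit, add_sub_cancel_right] at h3

/-- A point of `U` can be moved into `L` by a bounded nonnegative combination of generators. -/
lemma Separated.exists_bounded_relation [FiniteDimensional ℝ V] (h : LatticeGenerated N U E)
    {L : Submodule ℝ V} {k : ℕ} (hdim : Module.finrank ℝ L + (k + 1) = Module.finrank ℝ V) {x : ℝ}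
    (hx : 0 < x) (hsep : Separated N U L x) {K : ℕ} (hK : 0 < K) (hKx : 2 * (k : ℝ) ≤ K * x)
    {c : V} (hc : c ∈ algInterior U) (hcL : c ∈ L) {u : V} (hu : u ∈ U) :
    ∃ T ⊆ E, ∃ μ : V → ℝ, (∀ e ∈ T, 0 < μ e) ∧ u + ∑ e ∈ T, μ e • e ∈ L ∧
      ∑ e ∈ T, μ e ≤ (k + 1) * (2 * K ^ k / x) := by
  classical
  obtain ⟨T, hT, hmin⟩ := Finset.exists_min_image (E.powerset.filter fun T =>
    ∃ μ : V → ℝ, (∀ e ∈ T, 0 < μ e) ∧ u + ∑ e ∈ T, μ e • e ∈ L) Finset.card (by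
      obtain ⟨ε, hε, hmem⟩ := hc (-u)
      obtain ⟨l, hl, hlu⟩ := h.cone _ hmem
      refine ⟨E.filter fun e => 0 < ε⁻¹ * l e, ?_⟩
      simp only [Finset.mem_filter, Finset.mem_powerset]
      refine ⟨Finset.filter_subset _ _, fun e => ε⁻¹ * l e, by simp, ?_⟩
      rw [sum_filter_pos_smul E fun e _ => mul_nonneg (inv_nonneg.2 hε.le) (hl e)]
      have h1 := L.smul_mem ε⁻¹ hcL
      have h2 : ∑ e ∈ E, (ε⁻¹ * l e) • e = ε⁻¹ • ∑ e ∈ E, l e • e := by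
        rw [Finset.smul_sum]
        exact Finset.sum_congr rfl fun e _ => by rw [smul_smul]
      rw [h2, ← hlu, smul_add, smul_smul, inv_mul_cancel₀ hε.ne', one_smul]
      convert h1 using 1
      abel)
  simp only [Finset.mem_filter, Finset.mem_powerset] at hT hmin
  obtain ⟨hTE, μ, hμ, hμL⟩ := hT
  have hind : IndepMod L T := by
    have key : ∀ ρ : V → ℝ, ∑ e ∈ T, ρ e • e ∈ L → ¬ ∃ e ∈ T, 0 < ρ e := by
      intro ρ hρ hex
      obtain ⟨t, -, hnn, e', he', hz⟩ := exists_reduction hμ hex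
      have := hmin (T.filter fun e => 0 < μ e - t * ρ e)
        ⟨(Finset.filter_subset _ _).trans hTE, fun e => μ e - t * ρ e, by simp, by
            rw [sum_filter_pos_smul T hnn]
            have := L.sub_mem hμL (L.smul_mem t hρ)
            rw [Finset.smul_sum, add_sub_assoc, ← Finset.sum_sub_distrib] at this
            convert this using 3
            rw [sub_smul, smul_smul]⟩
      have h2 : (T.filter fun e => 0 < μ e - t * ρ e).card < T.card :=
        Finset.card_lt_card (Finset.filter_ssubset.2 ⟨e', he', by simp [hz]⟩)
      omega
    intro ρ hρ e he
    have h1 := key ρ hρ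
    have h2 := key (-ρ) (by simpa using L.neg_mem hρ)
    push Not at h1 h2
    have h3 := h2 e he
    simp only [Pi.neg_apply] at h3
    linarith [h1 e he]
  have hcard : T.card ≤ k + 1 := by have := hind.card_le; omega
  have hK' : (0 : ℝ) < K := by exact_mod_cast hK
  refine ⟨T, hTE, μ, hμ, hμL, ?_⟩
  have hle : ∀ e ∈ T, μ e ≤ 2 * K ^ k / x := by
    intro e₀ he₀
    by_contra! hlt
    have hμ₀ := hμ e₀ he₀
    set T' := T.erase e₀ with hT'
    have hcard' : T'.card ≤ k := by
      have := Finset.card_erase_add_one he₀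
      rw [← hT'] at this
      omega
    have hsum : ∀ f : V → V, ∑ e ∈ T, f e = f e₀ + ∑ e ∈ T', f e :=
      fun f => (Finset.add_sum_erase T f he₀).symm
    obtain ⟨n, hn, hnK, p, hp⟩ := exists_simultaneous_approx T' (fun e => μ e / μ e₀) hK
    have hn' : (0 : ℝ) < n := by exact_mod_cast hn
    set δ : V → ℝ := fun e => n * (μ e / μ e₀) - p e with hδ
    have hmem : ((n : ℤ) • e₀ + ∑ e ∈ T', p e • e) + (∑ e ∈ T', δ e • e + (n / μ e₀) • u) ∈ L := by
      have := L.smul_mem (n / μ e₀) hμL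
      rw [hsum, smul_add, smul_add, Finset.smul_sum, smul_smul, div_mul_cancel₀ _ hμ₀.ne'] at this
      have h2 : ∑ e ∈ T', (n / μ e₀) • μ e • e = ∑ e ∈ T', p e • e + ∑ e ∈ T', δ e • e := by
        rw [← Finset.sum_add_distrib]
        refine Finset.sum_congr rfl fun e _ => ?_
        rw [← Int.cast_smul_eq_zsmul ℝ, ← add_smul, smul_smul]
        congr 1
        simp only [hδ]
        ring
      rw [h2, Nat.cast_smul_eq_nsmul] at this
      rw [natCast_zsmul]
      convert this using 1
      abel
    have hzL := hsep.mem_of_add_sum_mem h (N.add_mem (N.zsmul_mem (h.lat e₀ (hTE he₀)) n)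
      (N.sum_mem fun e he => N.zsmul_mem (h.lat e (hTE (Finset.mem_of_mem_erase he))) (p e)))
      ((Finset.erase_subset _ _).trans hTE) hu (by
        have h1 : ∑ e ∈ T', |δ e| ≤ x / 2 := by
          calc ∑ e ∈ T', |δ e| ≤ T'.card • (1 / K : ℝ) := Finset.sum_le_card_nsmul _ _ _ hp
            _ ≤ k * (1 / K : ℝ) := by
              rw [nsmul_eq_mul]
              gcongr
            _ ≤ x / 2 := by
              rw [mul_one_div, div_le_iff₀ hK']
              linarith
        have h2 : |n / μ e₀| < x / 2 := by
          rw [abs_of_pos (by positivity), div_lt_iff₀ hμ₀]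
          have h3 : (n : ℝ) ≤ K ^ k := by
            exact_mod_cast hnK.trans (Nat.pow_le_pow_right hK hcard')
          rw [div_lt_iff₀ hx] at hlt
          linarith
        linarith) hmem
    have h1 := L.sub_mem hmem hzL
    rw [add_sub_cancel_left] at h1
    have h2 := L.sub_mem h1 (L.smul_mem (n / μ e₀) hμL)
    have h3 := hind (fun e => if e = e₀ then -n else δ e - n / μ e₀ * μ e) (by
      rw [hsum]
      have h4 : ∑ e ∈ T', (if e = e₀ then (-n : ℝ) else δ e - n / μ e₀ * μ e) • e
          = ∑ e ∈ T', δ e • e - ∑ e ∈ T', (n / μ e₀) • μ e • e := by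
        rw [← Finset.sum_sub_distrib]
        refine Finset.sum_congr rfl fun e he => ?_
        rw [if_neg (Finset.ne_of_mem_erase he), sub_smul, smul_smul]
      rw [h4, if_pos rfl]
      rw [hsum, smul_add, smul_add, Finset.smul_sum, smul_smul, div_mul_cancel₀ _ hμ₀.ne'] at h2
      convert h2 using 1
      rw [neg_smul]
      abel) e₀ he₀
    simp only [if_true, neg_eq_zero] at h3
    exact hn'.ne' h3
  calc ∑ e ∈ T, μ e ≤ T.card • (2 * K ^ k / x) := Finset.sum_le_card_nsmul _ _ _ hle
    _ ≤ (k + 1) * (2 * K ^ k / x) := by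
      rw [nsmul_eq_mul]
      have : (T.card : ℝ) ≤ k + 1 := by exact_mod_cast hcard
      gcongr

/-- A form nonnegative on the generators can be changed off `L` so as to vanish at generators
spanning a complement of `L`. -/
lemma LatticeGenerated.exists_vanishing [FiniteDimensional ℝ V] (h : LatticeGenerated N U E)
    {L : Submodule ℝ V} {c : V} (hc : c ∈ algInterior U) (hcL : c ∈ L) {ψ : V →ₗ[ℝ] ℝ}
    (hψ : ∀ e ∈ E, 0 ≤ ψ e) (m : ℕ) :
    Module.finrank ℝ L + m ≤ Module.finrank ℝ V →
    ∃ T ⊆ E, T.card ≤ m ∧ ∃ φ : V →ₗ[ℝ] ℝ, (∀ e ∈ E, 0 ≤ φ e) ∧ (∀ y ∈ L, φ y = ψ y) ∧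
      (∀ e ∈ T, φ e = 0) ∧
      Module.finrank ℝ L + m ≤ Module.finrank ℝ ↥(L ⊔ Submodule.span ℝ (T : Set V)) := by
  classical
  induction m with
  | zero => exact fun _ => ⟨∅, by simp, by simp, ψ, hψ, fun _ _ => rfl, by simp, by
    rw [add_zero]
    exact Submodule.finrank_mono le_sup_left⟩
  | succ m ih =>
    intro hdim
    obtain ⟨T, hTE, hTm, φ, hφE, hφL, hφT, hrank⟩ := ih (by omega)
    by_cases htop : L ⊔ Submodule.span ℝ (T : Set V) = ⊤
    · refine ⟨T, hTE, by omega, φ, hφE, hφL, hφT, ?_⟩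
      rw [htop, finrank_top]
      exact hdim
    obtain ⟨η, hη, hker⟩ := Submodule.exists_le_ker_of_lt_top _ (lt_top_iff_ne_top.2 htop)
    have hηc : η c = 0 := hker (Submodule.mem_sup_left hcL)
    obtain ⟨t, -, e, he, hηe, hze, hnn⟩ := exists_push (η := η) hφE (by
      by_contra! hcon
      have := pos_of_mem_algInterior hη (h.nonneg hcon) hc
      linarith)
    have heL : e ∉ L ⊔ Submodule.span ℝ (T : Set V) := fun hmem => by
      have : η e = 0 := hker hmem
      linarith
    refine ⟨insert e T, Finset.insert_subset he hTE, (Finset.card_insert_le _ _).trans (by omega),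
      φ + t • η, hnn, fun y hy => ?_, fun e' he' => ?_, ?_⟩
    · have : η y = 0 := hker (Submodule.mem_sup_left hy)
      simp [this, hφL y hy]
    · rcases Finset.mem_insert.1 he' with rfl | he'
      · exact hze
      · have : η e' = 0 := hker (Submodule.mem_sup_right (Submodule.subset_span he'))
        simp [this, hφT e' he']
    · have h1 := Submodule.finrank_sup_span_singleton heL
      have h2 : (L ⊔ Submodule.span ℝ (T : Set V)) ⊔ Submodule.span ℝ {e}
          = L ⊔ Submodule.span ℝ ((insert e T : Finset V) : Set V) := by
        rw [Finset.coe_insert, Submodule.span_insert, sup_assoc, sup_comm (Submodule.span ℝ {e})]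
      rw [h2] at h1
      omega

end Decomposition

section CodimensionMixing

variable {V : Type} [AddCommGroup V] [Module ℝ V]
variable {N : AddSubgroup V} {U : Set V} {E : Finset V}

lemma exists_finset_relations (E : Finset V) (L : Submodule ℝ V) (Q : ℕ) :
    ∃ E₀ : Finset V, ∀ y, y ∈ E₀ ↔ ∃ p : V → ℕ, ∑ e ∈ E, p e ≤ Q ∧
      y = ∑ e ∈ E, (p e : ℝ) • e ∧ y ∈ L := by
  classical
  have hfin : {y | ∃ p : V → ℕ, ∑ e ∈ E, p e ≤ Q ∧ y = ∑ e ∈ E, (p e : ℝ) • e ∧ y ∈ L}.Finite := by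
    refine ((Set.finite_Iic fun _ : E => Q).image
      fun q => ∑ e : E, (q e : ℝ) • (e : V)).subset ?_
    rintro _ ⟨p, hp, rfl, -⟩
    refine ⟨fun e => p e, fun e => ?_, Finset.sum_coe_sort E fun e => (p e : ℝ) • e⟩
    exact (Finset.single_le_sum (fun i _ => Nat.zero_le _) e.2).trans hp
  exact ⟨hfin.toFinset, fun y => hfin.mem_toFinset⟩

/-- Values of a form vanishing on generators complementary to `L` have bounded denominators. -/
lemma Separated.exists_denominator (h : LatticeGenerated N U E) {L : Submodule ℝ V} {m : ℕ} {x : ℝ}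
    (hsep : Separated N U L x) {K : ℕ} (hK : 0 < K) (hKx : (m : ℝ) < K * x) {φ : V →ₗ[ℝ] ℝ}
    (hφN : ∀ z ∈ N, z ∈ L → ∃ k : ℤ, φ z = k) {T : Finset V} (hT : T ⊆ E) (hTm : T.card ≤ m)
    (hφT : ∀ e ∈ T, φ e = 0) (htop : L ⊔ Submodule.span ℝ (T : Set V) = ⊤) {z : V} (hz : z ∈ N) :
    ∃ n : ℕ, 0 < n ∧ n ≤ K ^ m ∧ ∃ k : ℤ, n * φ z = k := by
  obtain ⟨y, hy, w, hw, rfl⟩ := Submodule.mem_sup.1 (htop ▸ Submodule.mem_top (x := z))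
  obtain ⟨f, -, rfl⟩ := Submodule.mem_span_finset.1 hw
  obtain ⟨n, hn, hnK, p, hp⟩ := exists_simultaneous_approx T f hK
  have hK' : (0 : ℝ) < K := by exact_mod_cast hK
  refine ⟨n, hn, hnK.trans (Nat.pow_le_pow_right hK hTm), ?_⟩
  set z' : V := (n : ℤ) • (y + ∑ e ∈ T, f e • e) - ∑ e ∈ T, p e • e with hz'
  have hz'N : z' ∈ N := N.sub_mem (N.zsmul_mem hz n)
    (N.sum_mem fun e he => N.zsmul_mem (h.lat e (hT he)) (p e))
  have hmem : z' + (∑ e ∈ T, (-(n * f e - p e)) • e + (0 : ℝ) • (0 : V)) ∈ L := by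
    have h1 := L.smul_mem (n : ℝ) hy
    convert h1 using 1
    have h2 : ∑ e ∈ T, (-(n * f e - p e)) • e
        = ∑ e ∈ T, p e • e - (n : ℝ) • ∑ e ∈ T, f e • e := by
      rw [Finset.smul_sum, ← Finset.sum_sub_distrib]
      refine Finset.sum_congr rfl fun e _ => ?_
      rw [← Int.cast_smul_eq_zsmul ℝ, smul_smul, ← sub_smul]
      congr 1
      ring
    rw [h2, hz', natCast_zsmul, ← Nat.cast_smul_eq_nsmul ℝ, smul_add, smul_zero, add_zero]
    abel
  have hz'L := hsep.mem_of_add_sum_mem h hz'N hT h.zero_mem (by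
    rw [abs_zero, add_zero]
    simp only [abs_neg]
    calc ∑ e ∈ T, |n * f e - p e| ≤ T.card • (1 / K : ℝ) := Finset.sum_le_card_nsmul _ _ _ hp
      _ ≤ m * (1 / K : ℝ) := by
        rw [nsmul_eq_mul]
        gcongr
      _ < x := by
        rw [mul_one_div, div_lt_iff₀ hK']
        linarith) hmem
  obtain ⟨k, hk⟩ := hφN z' hz'N hz'L
  refine ⟨k, ?_⟩
  have hp0 : φ (∑ e ∈ T, p e • e) = 0 := by
    rw [map_sum]
    exact Finset.sum_eq_zero fun e he => by rw [map_zsmul, hφT e he, smul_zero]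
  rw [← hk, hz', map_sub, map_zsmul, hp0, sub_zero, zsmul_eq_mul, Int.cast_natCast]

/-- The inductive step through a separated subspace of arbitrary codimension meeting the interior
of `U`. -/
lemma FormBound.hasIntegralForm_of_codim [FiniteDimensional ℝ V] {R : ℕ} (ih : FormBound R)
    (h : LatticeGenerated N U E) {a : ℝ} (ha : 0 < a) (hfree : LatticeFree N U a)
    {L : Submodule ℝ V} (hR : Module.finrank ℝ L = R) {k : ℕ}
    (hdim : R + (k + 1) = Module.finrank ℝ V) {x : ℝ} (hx : 0 < x) (hsep : Separated N U L x)
    {K : ℕ} (hK : 0 < K) (hKx : 2 * ((k : ℝ) + 1) < K * x) {c : V} (hc : c ∈ algInterior U)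
    (hcL : c ∈ L) {C : ℝ} (hC₁ : ((k : ℝ) + 1 + 1) * K ^ (k + 1) ≤ C)
    (hC₂ : K ^ (k + 1) * (1 + (k + 1) * (2 * K ^ k / x)) ≤ C) :
    HasIntegralForm N U (1 / gammaFn R (a / C)) := by
  classical
  have hK' : (0 : ℝ) < K := by exact_mod_cast hK
  have hKx' : ((k + 1 : ℕ) : ℝ) < K * x := by
    push_cast
    have : (0 : ℝ) ≤ k := by positivity
    linarith
  have hC : 0 < C := lt_of_lt_of_le (by positivity) hC₁
  have hdim' : Module.finrank ℝ L + (k + 1) = Module.finrank ℝ V := by rw [hR, hdim]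
  obtain ⟨E₀, hE₀⟩ := exists_finset_relations E L ((k + 1 + 1) * K ^ (k + 1))
  obtain ⟨ψ, ⟨y₀, hy₀L, hψy₀⟩, hψE, hψN, hψU⟩ := ih.exists_extension h ha hfree L hR hc hcL hC
    (E₀ := E₀) (fun e he => by obtain ⟨p, -, -, hL⟩ := (hE₀ e).1 he; exact hL) (fun e he => by
      obtain ⟨p, -, rfl, -⟩ := (hE₀ e).1 he
      refine N.sum_mem fun e he => ?_
      rw [Nat.cast_smul_eq_nsmul]
      exact N.nsmul_mem (h.lat e he) _) (fun e he => by
      obtain ⟨p, hp, rfl, -⟩ := (hE₀ e).1 he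
      refine h.exists_sum_eq_smul subset_rfl (fun e _ => Nat.cast_nonneg _) hC (le_trans ?_ hC₁)
      exact_mod_cast hp) (fun u hu huL => hsep.mem_finCone_of_relations h hdim' hK hKx'
      (fun p hp hpL => (hE₀ _).2 ⟨p, hp, rfl, hpL⟩) (h.cone u hu) huL)
  obtain ⟨T, hTE, hTm, φ, hφE, hφL, hφT, hrank⟩ := h.exists_vanishing hc hcL hψE (k + 1) hdim'.le
  have htop : L ⊔ Submodule.span ℝ (T : Set V) = ⊤ :=
    Submodule.eq_top_of_finrank_eq (le_antisymm (Submodule.finrank_le _) (by omega))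
  have hφ0 : φ ≠ 0 := by
    rintro rfl
    exact hψy₀ (by rw [← hφL y₀ hy₀L]; rfl)
  obtain ⟨g, hgN, hg0, hgen⟩ := exists_generator_of_gap (G := N.map φ.toAddMonoidHom)
    (δ := 1 / (K : ℝ) ^ (k + 1)) (by positivity) (by
      rintro _ ⟨z, hz, rfl⟩ hne
      change φ z ≠ 0 at hne
      change _ ≤ |φ z|
      obtain ⟨n, hn, hnK, l, hl⟩ := hsep.exists_denominator h hK hKx' (fun z hz hzL => by
        rw [hφL z hzL]; exact hψN z hz hzL) hTE hTm hφT htop hz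
      have hn' : (0 : ℝ) < n := by exact_mod_cast hn
      have hl0 : l ≠ 0 := by
        rintro rfl
        rw [Int.cast_zero] at hl
        exact (mul_ne_zero hn'.ne' hne) hl
      have h1 : (1 : ℝ) ≤ |(l : ℝ)| := by exact_mod_cast Int.one_le_abs hl0
      rw [← hl, abs_mul, abs_of_pos hn'] at h1
      have h2 : (n : ℝ) ≤ (K : ℝ) ^ (k + 1) := by exact_mod_cast hnK
      rw [div_le_iff₀ (by positivity)]
      nlinarith [abs_nonneg (φ z)])
  have hgne : g ≠ 0 := by
    rintro rfl
    obtain ⟨e, he, hne⟩ := h.exists_apply_ne_zero hφ0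
    obtain ⟨l, hl⟩ := hgen (φ e) ⟨e, h.lat e he, rfl⟩
    exact hne (by rw [hl, mul_zero])
  have hgpos : 0 < g := lt_of_le_of_ne hg0 hgne.symm
  have hgK : 1 ≤ g * (K : ℝ) ^ (k + 1) := by
    obtain ⟨z, hz, hzg⟩ := hgN
    change φ z = g at hzg
    obtain ⟨n, hn, hnK, l, hl⟩ := hsep.exists_denominator h hK hKx' (fun z hz hzL => by
      rw [hφL z hzL]; exact hψN z hz hzL) hTE hTm hφT htop hz
    have hn' : (0 : ℝ) < n := by exact_mod_cast hn
    rw [hzg] at hl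
    have h0 : (0 : ℝ) < l := by
      rw [← hl]
      positivity
    have h0' : 0 < l := by exact_mod_cast h0
    have h1 : (1 : ℝ) ≤ l := by exact_mod_cast h0'
    have h2 : (n : ℝ) ≤ (K : ℝ) ^ (k + 1) := by exact_mod_cast hnK
    nlinarith
  refine ⟨g⁻¹ • φ, smul_ne_zero (inv_ne_zero hgne) hφ0, fun z hz => ?_, fun u hu => ?_⟩
  · obtain ⟨l, hl⟩ := hgen (φ z) ⟨z, hz, rfl⟩
    refine ⟨l, ?_⟩
    rw [LinearMap.smul_apply, hl, smul_eq_mul]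
    field_simp
  have hφu := h.nonneg hφE u hu
  rw [LinearMap.smul_apply, smul_eq_mul]
  refine ⟨by positivity, ?_⟩
  obtain ⟨S, hSE, μ, hμ, hμL, hμsum⟩ := hsep.exists_bounded_relation h hdim' hx hK (by linarith)
    hc hcL hu
  set B : ℝ := (k + 1) * (2 * K ^ k / x) with hB
  have hBpos : 0 < B := by positivity
  obtain ⟨v, hv, hvsum⟩ := h.exists_sum_eq_smul hSE (fun e he => (hμ e he).le) hBpos hμsum
  rw [hvsum] at hμL
  have hw := h.convex hu hv (a := 1 / (1 + B)) (b := B / (1 + B)) (by positivity) (by positivity)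
    (by field_simp)
  set w := (1 / (1 + B)) • u + (B / (1 + B)) • v with hwdef
  have hwB : (1 + B) • w = u + B • v := by
    rw [hwdef, smul_add, smul_smul, smul_smul, mul_one_div, mul_div_cancel₀ _ (by positivity),
      div_self (by positivity), one_smul]
  have hwL : w ∈ L := by
    rw [← hwB] at hμL
    exact (L.smul_mem_iff (by positivity)).1 hμL
  have hφw : φ u + B * φ v = (1 + B) * ψ w := by
    rw [← hφL w hwL, ← smul_eq_mul (1 + B), ← map_smul, hwB, map_add, map_smul, smul_eq_mul]
  have hψw := hψU w hw hwL
  have hψw0 := h.nonneg hψE w hw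
  have hφv := h.nonneg hφE v hv
  have h1 : φ u ≤ (1 + B) * ψ w := by
    have : 0 ≤ B * φ v := by positivity
    linarith
  refine le_trans ?_ hψw
  rw [inv_mul_le_iff₀ hgpos]
  calc φ u ≤ 1 * ((1 + B) * ψ w) := by rwa [one_mul]
    _ ≤ (g * (K : ℝ) ^ (k + 1)) * ((1 + B) * ψ w) := by gcongr
    _ = g * (((K : ℝ) ^ (k + 1) * (1 + B)) * ψ w) := by ring
    _ ≤ g * (C * ψ w) := by gcongr

end CodimensionMixing

section Constants

lemma gammaFn_sq_le (n : ℕ) : ∀ b : ℝ, 0 < b → b ≤ 1 →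
    gammaFn (n + 1) (b ^ 2) ≤ 4 * (b / 4) ^ 2 ^ n := by
  have hsmall : ∀ b : ℝ, 0 < b → b ≤ 1 → ∀ k l : ℕ, l ≤ k → b ^ k ≤ b ^ l :=
    fun b h0 h1 k l => pow_le_pow_of_le_one h0.le h1
  have h3 : ∀ n : ℕ, ∀ b : ℝ, 0 < b → b ≤ 1 →
      gammaFn (n + 3) (b ^ 2) ≤ 4 * (b / 4) ^ 2 ^ (n + 2) := by
    intro n
    induction n with
    | zero =>
      intro b h0 h1
      rw [gammaFn_add_two, gammaFn_add_two, gammaFn]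
      have := hsmall b h0 h1 8 4 (by norm_num)
      have h4 : 0 ≤ b ^ 4 := by positivity
      norm_num
      ring_nf
      linarith
    | succ n ih =>
      intro b h0 h1
      have hn : (0 : ℝ) ≤ n := by positivity
      rw [gammaFn_add_two]
      have hb : b ^ 2 / ((n + 2 + 2 : ℕ) : ℝ) ≤ b ^ 2 / 4 := by
        push_cast
        gcongr
        linarith
      refine (ih _ (by positivity) (hb.trans (by nlinarith))).trans ?_
      have e : (b / 4) ^ 2 ^ (n + 1 + 2) = (b ^ 2 / 4 / 4) ^ 2 ^ (n + 2) := by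
        rw [show n + 1 + 2 = (n + 2) + 1 by ring, pow_succ 2 (n + 2), mul_comm (2 ^ (n + 2)) 2,
          pow_mul]
        congr 1
        ring
      rw [e]
      gcongr
  intro b h0 h1
  match n with
  | 0 =>
    simp only [gammaFn, pow_zero, pow_one]
    nlinarith
  | 1 =>
    rw [gammaFn_add_two, gammaFn]
    have := hsmall b h0 h1 4 2 (by norm_num)
    have h4 : 0 ≤ b ^ 2 := by positivity
    norm_num
    ring_nf
    linarith
  | n + 2 => exact h3 n b h0 h1

lemma gammaFn_le_supporting {n k : ℕ} (hk : k ≤ n) {a : ℝ} (ha : 0 < a)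
    (ha1 : a ≤ (n + 2 : ℕ)) :
    gammaFn (n + 2) a ≤ 4 * (a / (n + 2 : ℕ) / 4) ^ 2 ^ k := by
  have hn : (0 : ℝ) < (n + 2 : ℕ) := by positivity
  have h1 : a / (n + 2 : ℕ) ≤ 1 := (div_le_one hn).2 ha1
  rw [gammaFn_add_two]
  refine (gammaFn_sq_le n _ (by positivity) h1).trans ?_
  refine mul_le_mul_of_nonneg_left ?_ (by norm_num)
  exact pow_le_pow_of_le_one (by positivity) (by linarith) (Nat.pow_le_pow_right (by norm_num) hk)

lemma codimension_constant_le (m : ℕ) :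
    (2 * (m + 4 + 1 : ℝ) + 1) ^ (2 * (m + 4 + 1)) ≤
      (2 * (m + 4 : ℝ) + 1) ^ (2 * (m + 4)) * ((m + 4 + 1 : ℝ) ^ (2 * (m + 4)) * (m + 4 + 2)) := by
  have hm : (0 : ℝ) ≤ m := by positivity
  have h1 : 2 * (2 * (m + 4 + 1 : ℝ) + 1) ≤ (2 * (m + 4 : ℝ) + 1) * (m + 4 + 1) := by nlinarith
  have h4 : ∀ m : ℕ, 4 * ((m : ℝ) + 4 + 2) ≤ 2 ^ (2 * (m + 4)) := by
    intro m
    induction m with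
    | zero => norm_num
    | succ m ih =>
      have hm : (0 : ℝ) ≤ m := by positivity
      rw [show 2 * (m + 1 + 4) = 2 * (m + 4) + 2 by ring, pow_add]
      push_cast
      nlinarith
  have h2 := h4 m
  have h3 : (2 * (m + 4 + 1 : ℝ) + 1) ^ 2 ≤ 2 ^ (2 * (m + 4)) * (m + 4 + 2) := by
    calc (2 * (m + 4 + 1 : ℝ) + 1) ^ 2 ≤ 4 * ((m : ℝ) + 4 + 2) * (m + 4 + 2) := by nlinarith
      _ ≤ _ := by gcongr
  calc (2 * (m + 4 + 1 : ℝ) + 1) ^ (2 * (m + 4 + 1))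
      = (2 * (m + 4 + 1 : ℝ) + 1) ^ (2 * (m + 4)) * (2 * (m + 4 + 1 : ℝ) + 1) ^ 2 := by
        rw [← pow_add]; congr 1
    _ ≤ (2 * (m + 4 + 1 : ℝ) + 1) ^ (2 * (m + 4)) * (2 ^ (2 * (m + 4)) * (m + 4 + 2)) := by gcongr
    _ = (2 * (2 * (m + 4 + 1 : ℝ) + 1)) ^ (2 * (m + 4)) * (m + 4 + 2) := by
        rw [mul_pow]; ring
    _ ≤ ((2 * (m + 4 : ℝ) + 1) * (m + 4 + 1)) ^ (2 * (m + 4)) * (m + 4 + 2) := by gcongr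
    _ = _ := by rw [mul_pow]; ring

lemma gammaFn_le_codim (r m : ℕ) : ∀ b : ℝ, 0 < b → b ≤ 1 →
    gammaFn (r + 1 + (m + 4)) ((r + 1 + (m + 4) : ℕ) * b) ≤ gammaFn (r + 1)
      ((r + 1 + (m + 4) : ℕ) * b / ((2 * (m + 4 : ℝ) + 1) / b) ^ (2 * (m + 4))) := by
  have hr : (0 : ℝ) ≤ r := by positivity
  induction m with
  | zero =>
    intro b h0 h1
    rw [show r + 1 + (0 + 4) = r + 3 + 2 by ring, gammaFn_add_two,
      show r + 3 + 1 = r + 2 + 2 by ring, gammaFn_add_two, show r + 2 + 1 = r + 1 + 2 by ring,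
      gammaFn_add_two, show r + 1 + 1 = r + 2 by ring, gammaFn_add_two]
    refine gammaFn_mono _ _ _ (by positivity) ?_
    push_cast
    have e : (((((((r + 1 + 2 + 2 : ℝ) * b / (r + 1 + 2 + 2)) ^ 2 / (r + 2 + 2)) ^ 2 / (r + 1 + 2)) ^ 2) /
        (r + 2)) ^ 2) = b ^ 16 / ((r + 4) ^ 8 * (r + 3) ^ 4 * (r + 2) ^ 2) := by
      rw [mul_div_cancel_left₀ _ (by positivity)]
      field_simp
      ring
    rw [e]
    have e2 : ((r : ℝ) + 1 + 2 + 2) * b / ((2 * (0 + 4) + 1) / b) ^ 8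
        = (r + 5) * b ^ 9 / 9 ^ 8 := by
      field_simp
      ring
    rw [e2, div_le_div_iff₀ (by positivity) (by positivity)]
    have h2 : b ^ 16 ≤ b ^ 9 := pow_le_pow_of_le_one h0.le h1 (by norm_num)
    have h3 : (9 : ℝ) ^ 8 ≤ (r + 5) * ((r + 4) ^ 8 * (r + 3) ^ 4 * (r + 2) ^ 2) := by
      calc (9 : ℝ) ^ 8 ≤ (0 + 5) * ((0 + 4) ^ 8 * (0 + 3) ^ 4 * (0 + 2) ^ 2) := by norm_num
        _ ≤ _ := by gcongr
    calc b ^ 16 * 9 ^ 8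
        ≤ b ^ 9 * ((r + 5) * ((r + 4) ^ 8 * (r + 3) ^ 4 * (r + 2) ^ 2)) := by gcongr
      _ = _ := by ring
  | succ m ih =>
    intro b h0 h1
    have hm : (0 : ℝ) ≤ m := by positivity
    have hd : (0 : ℝ) < (r + 1 + (m + 4) : ℕ) := by positivity
    have hd1 : (1 : ℝ) ≤ (r + 1 + (m + 4) : ℕ) := by push_cast; linarith
    have hγ : gammaFn (r + 1 + (m + 1 + 4)) ((r + 1 + (m + 1 + 4) : ℕ) * b)
        = gammaFn (r + 1 + (m + 4)) ((r + 1 + (m + 4) : ℕ) * (b ^ 2 / (r + 1 + (m + 4) : ℕ))) := by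
      rw [show r + 1 + (m + 1 + 4) = (r + m + 4) + 2 by ring, gammaFn_add_two,
        mul_div_cancel_left₀ _ (by positivity), mul_div_cancel₀ _ hd.ne']
      congr 1
      ring
    rw [hγ]
    refine (ih _ (by positivity) ?_).trans (gammaFn_mono _ _ _ (by positivity) ?_)
    · rw [div_le_one hd]
      nlinarith
    rw [mul_div_cancel₀ _ hd.ne']
    set d : ℝ := ((r + 1 + (m + 4) : ℕ) : ℝ) with hd'
    have hd5 : (m : ℝ) + 4 + 1 ≤ d := by rw [hd']; push_cast; linarith
    have hds : ((r + 1 + (m + 1 + 4) : ℕ) : ℝ) = d + 1 := by rw [hd']; push_cast; ring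
    rw [hds]
    push_cast
    have e1 : b ^ 2 / ((2 * (m + 4 : ℝ) + 1) / (b ^ 2 / d)) ^ (2 * (m + 4))
        = b ^ (2 + 4 * (m + 4)) / ((2 * (m + 4 : ℝ) + 1) ^ (2 * (m + 4)) * d ^ (2 * (m + 4))) := by
      rw [div_div_eq_mul_div, div_pow, div_div_eq_mul_div, mul_pow, ← pow_mul, ← pow_add]
      congr 2
      ring
    have e2 : (d + 1) * b / ((2 * (m + 1 + 4 : ℝ) + 1) / b) ^ (2 * (m + 1 + 4))
        = (d + 1) * b ^ (2 * (m + 1 + 4) + 1) / (2 * (m + 4 + 1 : ℝ) + 1) ^ (2 * (m + 4 + 1)) := by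
      rw [div_pow, div_div_eq_mul_div, mul_assoc, ← pow_succ', add_right_comm (m : ℝ) 1 4,
        add_right_comm m 1 4]
    rw [e1, e2, div_le_div_iff₀ (by positivity) (by positivity)]
    have h2 : b ^ (2 + 4 * (m + 4)) ≤ b ^ (2 * (m + 1 + 4) + 1) :=
      pow_le_pow_of_le_one h0.le h1 (by omega)
    calc b ^ (2 + 4 * (m + 4)) * (2 * (m + 4 + 1 : ℝ) + 1) ^ (2 * (m + 4 + 1))
        ≤ b ^ (2 * (m + 1 + 4) + 1) * ((2 * (m + 4 : ℝ) + 1) ^ (2 * (m + 4)) *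
          (d ^ (2 * (m + 4)) * (d + 1))) := by
          refine mul_le_mul h2 ((codimension_constant_le m).trans ?_) (by positivity)
            (by positivity)
          have hd6 : (m : ℝ) + 4 + 2 ≤ d + 1 := by linarith
          gcongr
      _ = _ := by ring

end Constants

section Induction

variable {V : Type} [AddCommGroup V] [Module ℝ V]
variable {N : AddSubgroup V} {U : Set V} {E : Finset V}

lemma codimension_bounds (m : ℕ) {b : ℝ} (hb : 0 < b) (hb1 : b ≤ 1) :
    ∃ K : ℕ, 0 < K ∧ 2 * ((m : ℝ) + 1) < K * b ∧
      ((m : ℝ) + 1 + 1) * K ^ (m + 1) ≤ ((2 * (m + 1 : ℝ) + 1) / b) ^ (2 * (m + 1)) ∧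
      K ^ (m + 1) * (1 + (m + 1) * (2 * K ^ m / b)) ≤
        ((2 * (m + 1 : ℝ) + 1) / b) ^ (2 * (m + 1)) := by
  have hm : (0 : ℝ) ≤ m := by positivity
  set Y : ℝ := (2 * (m + 1 : ℝ) + 1) / b with hY
  have hinv : 1 ≤ 1 / b := (one_le_div hb).2 hb1
  have hYe : Y = 2 * (m + 1) * (1 / b) + 1 / b := by
    rw [hY]
    ring
  have hYm : (m : ℝ) + 1 + 1 ≤ Y := by
    rw [hYe]
    nlinarith
  have hY1 : 1 ≤ Y := by linarith
  set K : ℕ := ⌊2 * (m + 1 : ℝ) * (1 / b)⌋₊ + 1 with hK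
  have hK1 : 2 * (m + 1 : ℝ) * (1 / b) < K := by
    rw [hK]
    push_cast
    exact Nat.lt_floor_add_one _
  have hKY : (K : ℝ) ≤ Y := by
    have := Nat.floor_le (a := 2 * (m + 1 : ℝ) * (1 / b)) (by positivity)
    rw [hK, hYe]
    push_cast
    linarith
  refine ⟨K, by omega, ?_, ?_, ?_⟩
  · rw [mul_one_div, div_lt_iff₀ hb] at hK1
    exact hK1
  · calc ((m : ℝ) + 1 + 1) * K ^ (m + 1) ≤ Y * Y ^ (m + 1) := by gcongr
      _ = Y ^ (m + 2) := by ring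
      _ ≤ Y ^ (2 * (m + 1)) := pow_le_pow_right₀ hY1 (by omega)
  · have h1 : 1 ≤ Y ^ m * (1 / b) := one_le_mul_of_one_le_of_one_le (one_le_pow₀ hY1) hinv
    have h2 : 1 + (m + 1) * (2 * Y ^ m / b) ≤ Y ^ (m + 1) := by
      calc 1 + (m + 1) * (2 * Y ^ m / b) ≤ Y ^ m * (1 / b) + (m + 1) * (2 * Y ^ m / b) := by gcongr
        _ = Y ^ m * (2 * (m + 1) * (1 / b) + 1 / b) := by ring
        _ = Y ^ (m + 1) := by rw [← hYe, pow_succ]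
    calc (K : ℝ) ^ (m + 1) * (1 + (m + 1) * (2 * K ^ m / b))
        ≤ Y ^ (m + 1) * (1 + (m + 1) * (2 * Y ^ m / b)) := by gcongr
      _ ≤ Y ^ (m + 1) * Y ^ (m + 1) := by gcongr
      _ = Y ^ (2 * (m + 1)) := by rw [← pow_add]; congr 1; ring

lemma FormBound.one : FormBound 1 := by
  intro V _ _ _ N U E a hdim h ha hfree
  obtain ⟨L, hL, x, hx, hsep, -⟩ := exists_separated_of_latticeFree h 1 ⊥ 0 a a
    (by rw [finrank_bot, hdim]) ha (by simp) ha (by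
      intro z hz v hv hmem
      rw [Submodule.mem_bot, sub_zero, sub_eq_zero] at hmem
      exact hfree z hz v hv hmem)
  obtain rfl : L = ⊥ := by
    have := Submodule.finrank_lt hL
    exact Submodule.finrank_eq_zero.1 (by omega)
  obtain ⟨ψ, hψ, hψL, hψE⟩ := h.exists_supporting ⊥ (by
    intro y hy
    rw [(Submodule.mem_bot ℝ).1 hy]
    exact hfree.zero_notMem)
  have := (hsep.mono hx).hasIntegralForm_of_supporting h 0 ⊥ a ψ (by rw [finrank_bot, hdim]) ha
    hψ hψE (fun y hy => hψL y hy)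
  convert this using 2
  rw [gammaFn]
  ring

lemma FormBound.succ (n : ℕ) (ih : ∀ k ≤ n, FormBound (k + 1)) : FormBound (n + 2) := by
  intro V _ _ _ N U E a hdim h ha hfree
  have hd : (0 : ℝ) < (n + 2 : ℕ) := by positivity
  set b : ℝ := a / (n + 2 : ℕ) with hb
  have hb0 : 0 < b := by positivity
  have had : a ≤ (n + 2 : ℕ) := hdim ▸ h.le_finrank ha hfree
  have hb1 : b ≤ 1 := (div_le_one hd).2 had
  have hab : a = (n + 2 : ℕ) * b := (mul_div_cancel₀ _ hd.ne').symm
  obtain ⟨L, hL, x, hx, hsep, hor⟩ := exists_separated_of_latticeFree h (n + 2) ⊥ 0 a b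
    (by rw [finrank_bot, hdim]; omega) hb0 hab.ge ha (by
      intro z hz v hv hmem
      rw [Submodule.mem_bot, sub_zero, sub_eq_zero] at hmem
      exact hfree z hz v hv hmem)
  rcases eq_or_ne L ⊥ with rfl | hbot
  · exact hasIntegralForm_of_separated_bot h hdim (ih n le_rfl) ha hfree (hsep.mono hx)
  have hbx : b < x := hor.resolve_left hbot
  have hlt := Submodule.finrank_lt hL
  have hRpos : Module.finrank ℝ L ≠ 0 := fun h0 => hbot (Submodule.finrank_eq_zero.1 h0)
  obtain ⟨R, hR⟩ := Nat.exists_eq_succ_of_ne_zero hRpos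
  obtain ⟨m, hm⟩ : ∃ m, Module.finrank ℝ L + (m + 1) = Module.finrank ℝ V :=
    ⟨Module.finrank ℝ V - Module.finrank ℝ L - 1, by omega⟩
  by_cases hmeet : ∃ c ∈ L, c ∈ algInterior U
  swap
  · push Not at hmeet
    obtain ⟨ψ, hψ, hψL, hψE⟩ := h.exists_supporting L hmeet
    refine ((hsep.mono hx).hasIntegralForm_of_supporting h m L b ψ hm hb0 hψ hψE
      (fun y hy => hψL y hy)).mono ?_
    exact one_div_le_one_div_of_le (gammaFn_pos _ _ ha) (gammaFn_le_supporting (by omega) ha had)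
  obtain ⟨c, hcL, hc⟩ := hmeet
  rcases lt_or_ge m 3 with hm3 | hm3
  · obtain ⟨ψ, hψ, hLψ, hsep'⟩ := hsep.exists_hyperplane h m L x b hm hb0 hbx
    have hω : 0 < b / 2 ^ m := by positivity
    obtain ⟨g, hg, hgN, hgU⟩ := hsep'.exists_normalization h hψ hω
    have := hasIntegralForm_of_width (ih n le_rfl) h hdim ha hfree (φ := g⁻¹ • ψ)
      (smul_ne_zero (inv_ne_zero hg.ne') hψ) (fun z hz => by
        obtain ⟨k, hk⟩ := hgN z hz
        exact ⟨k, by rw [LinearMap.smul_apply, hk, smul_eq_mul]; field_simp⟩)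
      (W := 1 / (b / 2 ^ m)) (fun u hu u' hu' => by
        rw [LinearMap.smul_apply, LinearMap.smul_apply, ← smul_sub, smul_eq_mul,
          inv_mul_le_iff₀ hg, mul_one_div]
        exact hgU u hu u' hu') hc (by
        have : ψ c = 0 := hLψ hcL
        rw [LinearMap.smul_apply, this, smul_zero])
    refine this.mono (one_div_le_one_div_of_le (gammaFn_pos _ _ ha) ?_)
    rw [gammaFn_add_two]
    refine gammaFn_mono _ _ _ (by positivity) ?_
    have h2 : (2 : ℝ) ^ m ≤ (n + 2 : ℕ) := by
      have : m ≤ n := by omega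
      have h3 : 2 ^ m ≤ n + 2 := by
        interval_cases m <;> omega
      exact_mod_cast h3
    rw [← hb, div_div_eq_mul_div, div_one, mul_div_assoc', le_div_iff₀ (by positivity), hab]
    nlinarith [sq_nonneg b]
  · obtain ⟨m, rfl⟩ : ∃ l, m = l + 3 := ⟨m - 3, by omega⟩
    obtain ⟨K, hK, hKb, hC₁, hC₂⟩ := codimension_bounds (m + 3) hb0 hb1
    have hn : n + 2 = R + 1 + (m + 4) := by omega
    have := (ih R (by omega)).hasIntegralForm_of_codim h ha hfree hR (k := m + 3)
      (by omega) hb0 (hsep.mono hx) hK hKb hc hcL hC₁ hC₂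
    refine this.mono (one_div_le_one_div_of_le (gammaFn_pos _ _ ha) ?_)
    have h2 := gammaFn_le_codim R m b hb0 hb1
    rw [← hn, ← hab] at h2
    rw [show ((m + 3 : ℕ) : ℝ) + 1 = m + 4 by push_cast; ring]
    exact h2

lemma formBound (n : ℕ) : FormBound (n + 1) := by
  induction n using Nat.strong_induction_on with
  | _ n ih =>
    cases n with
    | zero => exact FormBound.one
    | succ n => exact FormBound.succ n fun k hk => ih k (by omega)

end Induction

section RealVectors

/-- The integer vectors in `ℝ^d`, as an additive subgroup. -/
def integerVectors (d : ℕ) : AddSubgroup (Fin d → ℝ) where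
  carrier := intPts d
  zero_mem' i := ⟨0, by simp⟩
  add_mem' {x y} hx hy i := by
    obtain ⟨k, hk⟩ := hx i
    obtain ⟨l, hl⟩ := hy i
    exact ⟨k + l, by simp [hk, hl]⟩
  neg_mem' {x} hx i := by
    obtain ⟨k, hk⟩ := hx i
    exact ⟨-k, by simp [hk]⟩

lemma single_mem_integerVectors {d : ℕ} (i : Fin d) :
    (Pi.single i 1 : Fin d → ℝ) ∈ integerVectors d := by
  intro j
  rcases eq_or_ne j i with rfl | hj
  · exact ⟨1, by simp⟩
  · exact ⟨0, by simp [hj]⟩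

lemma coe_finCone {V : Type} [AddCommGroup V] [Module ℝ V] (E : Finset V) :
    (finCone E : Set V) = coneHull (E : Set V) := by
  ext x
  constructor
  · rintro ⟨c, hc, rfl⟩
    refine ⟨E.card, fun i => c (E.equivFin.symm i), fun i => E.equivFin.symm i, fun i => hc _,
      fun i => (E.equivFin.symm i).2, ?_⟩
    rw [Equiv.sum_comp E.equivFin.symm fun e : E => c e • (e : V), ← Finset.sum_coe_sort E]
  · rintro ⟨n, c, v, hc, hv, rfl⟩
    exact Submodule.sum_mem _ fun i _ => smul_mem_finCone (mem_finCone_of_mem (hv i)) (hc i)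

lemma convex_coneHull {V : Type} [AddCommGroup V] [Module ℝ V] (E : Finset V) :
    Convex ℝ (coneHull (E : Set V)) := by
  rw [← coe_finCone]
  intro x hx y hy s t hs ht _
  exact Submodule.add_mem _ (smul_mem_finCone hx hs) (smul_mem_finCone hy ht)

lemma LatticeGenerated.algInterior_subset_interior {d : ℕ} {N : AddSubgroup (Fin d → ℝ)}
    {U : Set (Fin d → ℝ)} {E : Finset (Fin d → ℝ)} (h : LatticeGenerated N U E) :
    algInterior U ⊆ interior U := by
  obtain ⟨c, hc⟩ : (interior U).Nonempty := by
    rw [h.convex.interior_nonempty_iff_affineSpan_eq_top,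
      AffineSubspace.affineSpan_eq_top_iff_vectorSpan_eq_top_of_nonempty _ _ _ ⟨0, h.zero_mem⟩,
      eq_top_iff, ← h.span]
    refine Submodule.span_le.2 fun e he => ?_
    simpa using vsub_mem_vectorSpan ℝ (h.mem e he) h.zero_mem
  intro x hx
  obtain ⟨ε, hε, hmem⟩ := hx (x - c)
  have hε1 : (0 : ℝ) < 1 + ε := by linarith
  have := h.convex.combo_interior_self_mem_interior hc hmem (a := ε / (1 + ε))
    (b := 1 / (1 + ε)) (by positivity) (by positivity) (by field_simp; ring)
  convert this using 1
  rw [smul_add, smul_smul, smul_sub]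
  have h1 : (1 : ℝ) / (1 + ε) + 1 / (1 + ε) * ε = 1 := by field_simp
  have h2 : ε / (1 + ε) = 1 / (1 + ε) * ε := by ring
  rw [h2]
  calc x = (1 : ℝ) • x := (one_smul ℝ x).symm
    _ = (1 / (1 + ε) + 1 / (1 + ε) * ε) • x := by rw [h1]
    _ = _ := by module

end RealVectors

/-- Let `N` be a lattice of rank `d ≥ 1` with dual lattice `M` (modelled as `ℤ^d ⊆ ℝ^d`),
and let `σ ⊆ N_ℝ` be a rational polyhedral cone with `dim σ = d` and `σ ≠ N_ℝ`. Let
`U = conv(F) + cone(G) ⊆ N_ℝ` with `F ⊆ N_ℝ` finite and `G ⊆ N` finite, such that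
`0 ∈ U`, `⋃_{t>0} tU = σ`, and `N ∩ U` contains a finite set generating `σ` as a convex
cone. Let `a > 0` with `N ∩ int(aU) = ∅`. Then there exists a nonzero `φ ∈ M` with `φ_ℝ`
nonnegative on `σ` and `φ_ℝ(U) ⊆ [0, 1/γ(d, a)]`. -/
theorem stmt_17 (d : ℕ) (hd : 1 ≤ d)
    (S : Finset (Fin d → ℝ)) (hS : (S : Set (Fin d → ℝ)) ⊆ intPts d)
    (σ : Set (Fin d → ℝ)) (hσ : σ = coneHull (S : Set (Fin d → ℝ)))
    (hσdim : Submodule.span ℝ σ = ⊤) (hσne : σ ≠ Set.univ)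
    (F G : Finset (Fin d → ℝ)) (hG : (G : Set (Fin d → ℝ)) ⊆ intPts d)
    (U : Set (Fin d → ℝ))
    (hUdef : U = {x | ∃ p ∈ convexHull ℝ (F : Set (Fin d → ℝ)),
      ∃ s ∈ coneHull (G : Set (Fin d → ℝ)), x = p + s})
    (hU0 : (0 : Fin d → ℝ) ∈ U)
    (hUσ : {x | ∃ t : ℝ, 0 < t ∧ ∃ u ∈ U, x = t • u} = σ)
    (hgen : ∃ S' : Finset (Fin d → ℝ), (S' : Set (Fin d → ℝ)) ⊆ intPts d ∩ U ∧
      coneHull (S' : Set (Fin d → ℝ)) = σ)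
    (a : ℝ) (ha : 0 < a)
    (hmld : intPts d ∩ interior (a • U) = ∅) :
    ∃ φ : Fin d → ℝ, φ ∈ intPts d ∧ φ ≠ 0 ∧
      (∀ e ∈ σ, 0 ≤ ∑ i, φ i * e i) ∧
      (∀ u ∈ U, (∑ i, φ i * u i) ∈ Set.Icc 0 (1 / gammaFn d a)) := by
  obtain ⟨E, hE, hEσ⟩ := hgen
  have hUE : ∀ u ∈ U, u ∈ coneHull (E : Set (Fin d → ℝ)) := by
    intro u hu
    rw [hEσ, ← hUσ]
    exact ⟨1, one_pos, u, hu, (one_smul ℝ u).symm⟩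
  have h : LatticeGenerated (integerVectors d) U E := {
    convex := by
      have : U = convexHull ℝ (F : Set (Fin d → ℝ)) + coneHull (G : Set (Fin d → ℝ)) := by
        rw [hUdef]
        ext x
        simp [Set.mem_add, eq_comm]
      rw [this]
      exact (convex_convexHull ℝ _).add (convex_coneHull G)
    zero_mem := hU0
    lat := fun e he => (hE he).1
    mem := fun e he => (hE he).2
    span := by
      rw [eq_top_iff, ← hσdim, ← hEσ]
      refine Submodule.span_le.2 ?_
      rintro x ⟨n, c, v, -, hv, rfl⟩
      exact Submodule.sum_mem _ fun i _ => Submodule.smul_mem _ _ (Submodule.subset_span (hv i))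
    cone := fun u hu => by
      have := hUE u hu
      rwa [← coe_finCone] at this }
  have hfree : LatticeFree (integerVectors d) U a := by
    rintro z hz v hv rfl
    have hmem : a • v ∈ intPts d ∩ interior (a • U) := by
      refine ⟨hz, ?_⟩
      rw [interior_smul₀ ha.ne']
      exact Set.smul_mem_smul_set (h.algInterior_subset_interior hv)
    rw [hmld] at hmem
    exact hmem
  obtain ⟨n, rfl⟩ : ∃ n, d = n + 1 := ⟨d - 1, by omega⟩
  obtain ⟨φ, hφ, hφN, hφU⟩ := formBound n _ _ U E a (by simp) h ha hfree
  have hsum : ∀ u, ∑ i, φ (Pi.single i 1) * u i = φ u := by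
    intro u
    rw [LinearMap.pi_apply_eq_sum_univ φ u]
    refine Finset.sum_congr rfl fun i _ => ?_
    rw [smul_eq_mul, mul_comm]
    congr 2
    ext j
    simp [Pi.single_apply, eq_comm]
  refine ⟨fun i => φ (Pi.single i 1), fun i => hφN _ (single_mem_integerVectors i), ?_, ?_, ?_⟩
  · intro h0
    refine hφ (LinearMap.ext fun u => ?_)
    rw [← hsum]
    simp [fun i => congrFun h0 i]
  · intro e he
    rw [← hUσ] at he
    obtain ⟨t, ht, u, hu, rfl⟩ := he
    rw [hsum, map_smul, smul_eq_mul]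
    exact mul_nonneg ht.le (hφU u hu).1
  · intro u hu
    rw [hsum]
    exact hφU u hu
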